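/- Let d = (d_1, …, d_n) be a graphical degree sequence with minimum degree d_min ≥ 1 and maximum degree d_max satisfying 3 ≤ d_max ≤ (1/3)·√M, where M = Σ_{j=1}^n d_j. Then the mixing time τ(M(d), ε) of the switch chain M(d) on Ω(d) satisfies τ(M(d), ε) ≤ d_max^{14} · M^9 · ( (1/2)·M·log(M) + log(ε^{-1}) ). -/

import Mathlib

/-!
The bound comes from a Poincaré inequality for the switch chain, proved with randomized canonical
paths between all pairs of realizations `G`, `G'` of `d`.

*Markov chain part* (`dTV_le`). The chain is symmetric and stays put with probability at least
`1/3`, since choosing `F' = F` is always accepted. Hence a Poincaré inequality with constant `κ`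
contracts the `ℓ²` distance to uniformity by a fixed factor each `κ` steps or so, and
`3 κ (½ log |Ω| + log ε⁻¹)` steps suffice; moreover `|Ω| ≤ M ^ M` (`card_omega_le`).

*Paths* (`path_total`). Pair, at every vertex, the edges of `G \ G'` with those of `G' \ G`. The
pairing `ψ` splits the symmetric difference into closed alternating trails, which are switched one
after the other. While a trail is being switched the current edge set is a *near-state*: it misses
one unit of degree at the start `u` of the trail and one at the current vertex `v`. A near-state
`K` is completed to a realization by replacing an edge `ab` of `K` by `ua` and `vb`; the assumption
`9 d_max² ≤ M` leaves enough edges `ab` for this, and completions of successive near-states are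
joined by a bounded number of switches (`link_close`, `link_slide`). So `|F G - F G'|` is at most
the sum of `5 √(enN N)` over the near-states `N` on the path, where `enN N` is the energy of `F` on
the switches at completions of `N`.

*Congestion* (`congestion_posns`). To the near-state `N` on the path corresponds the complementary
set `L`: `G + G' - N` minus one trail edge at each of the two defects, which is a near-state too.
From `N` and `L` one recovers the symmetric difference and, at every vertex, the two classes that
`ψ` pairs with each other (`psi_mem_dec`); the number of systems of pairings of these classes is
the same as for the original ones (`card_pairs_dec`), and `N`, `L`, `ψ` determine everything
(`decode_inj`). Averaging over `ψ`, each pair `(N, L)` is therefore charged at most once. Since a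
realization completes at most `M²` near-states, there are at most `M² |Ω|` near-states, and the
inequality `poincare` follows with a constant polynomial in `M`; the resulting bound on the mixing
time, `31 M⁷ (½ M log M + log ε⁻¹)`, is below the one claimed.
-/

open scoped Classical

noncomputable section

namespace SwitchChain

variable {n : ℕ}

/-- `Omega d` is the set of simple graphs on `[n] = Fin n` with degree sequence `d`. -/
def Omega (d : Fin n → ℕ) : Set (SimpleGraph (Fin n)) :=
  {G | ∀ v, {w | G.Adj v w}.ncard = d v}

/-- `M d` is the sum of the degrees. -/
def M (d : Fin n → ℕ) : ℕ := ∑ j, d j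

/-- The maximum degree. -/
def dmax (d : Fin n → ℕ) : ℕ := Finset.univ.sup d

/-- `F` is an unordered pair of two distinct edges of `G` sharing no endpoint. -/
def IsDisjointEdgePair (G : SimpleGraph (Fin n)) (F : Set (Sym2 (Fin n))) : Prop :=
  F ⊆ G.edgeSet ∧ F.ncard = 2 ∧
    ∀ e ∈ F, ∀ f ∈ F, e ≠ f → ∀ v : Fin n, v ∈ e → v ∉ f

/-- The number of unordered pairs of two distinct edges of `G` sharing no endpoint. -/
def pairCount (G : SimpleGraph (Fin n)) : ℕ :=
  {F : Set (Sym2 (Fin n)) | IsDisjointEdgePair G F}.ncard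

/-- The support (set of endvertices) of a set of edges. -/
def supp (F : Set (Sym2 (Fin n))) : Set (Fin n) := {v | ∃ e ∈ F, v ∈ e}

/-- `F'` is a perfect matching of (the complete graph on) the vertex set `S`. -/
def IsPerfectMatchingOn (S : Set (Fin n)) (F' : Set (Sym2 (Fin n))) : Prop :=
  F'.ncard = 2 ∧ (∀ e ∈ F', ¬ e.IsDiag) ∧ supp F' = S ∧
    ∀ e ∈ F', ∀ f ∈ F', e ≠ f → ∀ v : Fin n, v ∈ e → v ∉ f

/-- The number of accepted choices `(F, F')` of the switch-chain procedure at `G`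
producing the graph `G'`. -/
def switchCount (G G' : SimpleGraph (Fin n)) : ℕ :=
  {FF : Set (Sym2 (Fin n)) × Set (Sym2 (Fin n)) |
    IsDisjointEdgePair G FF.1 ∧ IsPerfectMatchingOn (supp FF.1) FF.2 ∧
    FF.2 ∩ (G.edgeSet \ FF.1) = ∅ ∧
    G'.edgeSet = (G.edgeSet \ FF.1) ∪ FF.2}.ncard

/-- The state space of the switch chain, as a type. -/
abbrev OmegaType (d : Fin n → ℕ) : Type := {G : SimpleGraph (Fin n) // G ∈ Omega d}

instance (d : Fin n → ℕ) : Fintype (OmegaType d) := Fintype.ofFinite _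

/-- The transition matrix of the switch chain `M(d)` on `Omega d`: from `G`, choose
uniformly at random an unordered pair `F` of distinct edges of `G` sharing no endpoint
(there are `pairCount G` of them), and uniformly at random one of the three perfect
matchings `F'` on the four endvertices; if `F'` avoids `E(G) \ F`, move to the graph
with edge set `(E(G) \ F) ∪ F'`, else stay. -/
def transP (d : Fin n → ℕ) : Matrix (OmegaType d) (OmegaType d) ℝ :=
  fun G G' =>
    if G = G' then
      1 - ∑ H : OmegaType d,
        (if H = G then 0 else (switchCount G.1 H.1 : ℝ) / (3 * pairCount G.1))
    else (switchCount G.1 G'.1 : ℝ) / (3 * pairCount G.1)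

/-- Total variation distance between two distributions on a finite set. -/
def dTV {Ω : Type*} [Fintype Ω] (σ σ' : Ω → ℝ) : ℝ := (1/2) * ∑ x, |σ x - σ' x|

/-- The mixing time of a Markov chain with transition matrix `P` and stationary
distribution `π`: the maximum over starting states `x` of the least `T` such that the
distribution after `t ≥ T` steps from `x` is within `ε` of `π` in total variation. -/
def mixingTime {Ω : Type*} [Fintype Ω] (P : Matrix Ω Ω ℝ) (π : Ω → ℝ) (ε : ℝ) : ℕ :=
  Finset.univ.sup fun x : Ω =>
    sInf {T : ℕ | ∀ t, T ≤ t → dTV (fun y => (P ^ t) x y) π ≤ ε}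

/-- The uniform distribution on the state space. -/
def uniformDist (d : Fin n → ℕ) : OmegaType d → ℝ :=
  fun _ => (Fintype.card (OmegaType d) : ℝ)⁻¹

/-! ### Mixing from a Poincaré inequality -/

section MarkovChain

variable {Ω : Type*} [Fintype Ω]

lemma sum_sq_sub (Q : Ω → Ω → ℝ) (hs : ∀ x y, Q x y = Q y x) (hr : ∀ x, ∑ y, Q x y = 1)
    (g : Ω → ℝ) :
    ∑ x, ∑ y, Q x y * (g x - g y) ^ 2 =
      2 * (∑ x, g x ^ 2 - ∑ x, g x * ∑ y, Q x y * g y) := by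
  have h1 : ∀ x y, Q x y * (g x - g y) ^ 2 =
      Q x y * g x ^ 2 + Q y x * g y ^ 2 - 2 * (g x * (Q x y * g y)) := by
    intro x y; rw [hs y x]; ring
  simp_rw [h1, Finset.sum_sub_distrib, Finset.sum_add_distrib]
  rw [Finset.sum_comm (f := fun x y => Q y x * g y ^ 2)]
  simp_rw [← Finset.sum_mul, hr, ← Finset.mul_sum]
  ring

/-- One step of the chain contracts the `ℓ²` norm of a mean-zero function: the Dirichlet form of
`P ^ 2` dominates `2 / 3` of that of `P`, because `P` holds with probability at least `1 / 3`. -/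
lemma l2_contraction (P : Matrix Ω Ω ℝ) (hs : ∀ x y, P x y = P y x)
    (hnn : ∀ x y, 0 ≤ P x y) (hr : ∀ x, ∑ y, P x y = 1) (hd : ∀ x, 1 / 3 ≤ P x x)
    (κ : ℝ) (hκ : 0 < κ)
    (hP : ∀ f : Ω → ℝ, ∑ x, ∑ y, (f x - f y) ^ 2 ≤
      κ * Fintype.card Ω * ∑ x, ∑ y, P x y * (f x - f y) ^ 2)
    (g : Ω → ℝ) (hg : ∑ x, g x = 0) :
    ∑ x, (∑ y, P x y * g y) ^ 2 ≤ (1 - 2 / (3 * κ)) * ∑ x, g x ^ 2 := by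
  set Q : Ω → Ω → ℝ := fun x y => ∑ z, P x z * P z y with hQ
  have hQs : ∀ x y, Q x y = Q y x := by
    intro x y
    simp only [hQ]
    refine Finset.sum_congr rfl fun z _ => ?_
    rw [hs x z, hs z y]; ring
  have hQr : ∀ x, ∑ y, Q x y = 1 := by
    intro x
    simp only [hQ]
    rw [Finset.sum_comm]
    simp_rw [← Finset.mul_sum, hr, mul_one, hr]
  have e1 := sum_sq_sub Q hQs hQr g
  have e2 : ∑ x, g x * ∑ y, Q x y * g y = ∑ x, (∑ y, P x y * g y) ^ 2 := by
    have : ∀ z, (∑ y, P z y * g y) ^ 2 = ∑ x, ∑ y, g x * (P x z * P z y * g y) := by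
      intro z
      rw [sq, Finset.sum_mul_sum]
      refine Finset.sum_congr rfl fun x _ => Finset.sum_congr rfl fun y _ => ?_
      rw [hs z x]; ring
    simp_rw [this]
    rw [Finset.sum_comm]
    refine Finset.sum_congr rfl fun x _ => ?_
    rw [Finset.sum_comm, Finset.mul_sum]
    refine Finset.sum_congr rfl fun y _ => ?_
    rw [Finset.sum_mul, Finset.mul_sum]
  have e3 : ∀ x y, 2 / 3 * (P x y * (g x - g y) ^ 2) ≤ Q x y * (g x - g y) ^ 2 := by
    intro x y
    by_cases hxy : x = y
    · subst hxy; simp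
    · have : 2 / 3 * P x y ≤ Q x y := by
        have h2 : ∑ z ∈ {x, y}, P x z * P z y ≤ Q x y :=
          Finset.sum_le_sum_of_subset_of_nonneg (Finset.subset_univ _)
            fun z _ _ => mul_nonneg (hnn _ _) (hnn _ _)
        rw [Finset.sum_pair hxy] at h2
        nlinarith [mul_le_mul_of_nonneg_right (hd x) (hnn x y),
          mul_le_mul_of_nonneg_left (hd y) (hnn x y)]
      nlinarith [mul_le_mul_of_nonneg_right this (sq_nonneg (g x - g y))]
  have e4 : 2 / 3 * ∑ x, ∑ y, P x y * (g x - g y) ^ 2 ≤ ∑ x, ∑ y, Q x y * (g x - g y) ^ 2 := by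
    simp_rw [Finset.mul_sum]
    exact Finset.sum_le_sum fun x _ => Finset.sum_le_sum fun y _ => e3 x y
  have e5 : ∑ x, ∑ y, (g x - g y) ^ 2 = 2 * Fintype.card Ω * ∑ x, g x ^ 2 := by
    have h1 : ∀ x y, (g x - g y) ^ 2 = g x ^ 2 + g y ^ 2 - 2 * (g x * g y) := by
      intro x y; ring
    simp_rw [h1, Finset.sum_sub_distrib, Finset.sum_add_distrib, ← Finset.mul_sum, hg]
    simp [← Finset.mul_sum]
    ring
  have e6 := hP g
  rw [e5] at e6
  have e7 : 2 * ∑ x, g x ^ 2 ≤ κ * ∑ x, ∑ y, P x y * (g x - g y) ^ 2 := by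
    rcases isEmpty_or_nonempty Ω with h | h
    · simp
    · have hN : (0 : ℝ) < Fintype.card Ω := by exact_mod_cast Fintype.card_pos
      refine le_of_mul_le_mul_left ?_ hN
      linarith
  rw [e2] at e1
  have e8 : 2 / (3 * κ) * ∑ x, g x ^ 2 ≤ 1 / 3 * ∑ x, ∑ y, P x y * (g x - g y) ^ 2 := by
    rw [div_mul_eq_mul_div, div_le_iff₀ (by positivity)]
    linarith
  linarith

/-- Mixing from a Poincaré inequality: total variation distance after `t` steps. -/
lemma dTV_le (P : Matrix Ω Ω ℝ) (hs : ∀ x y, P x y = P y x)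
    (hnn : ∀ x y, 0 ≤ P x y) (hr : ∀ x, ∑ y, P x y = 1) (hd : ∀ x, 1 / 3 ≤ P x x)
    (κ : ℝ) (hκ : 1 ≤ κ)
    (hP : ∀ f : Ω → ℝ, ∑ x, ∑ y, (f x - f y) ^ 2 ≤
      κ * Fintype.card Ω * ∑ x, ∑ y, P x y * (f x - f y) ^ 2)
    (ε : ℝ) (hε : 0 < ε) (x : Ω) (t : ℕ)
    (ht : 3 * κ * (1 / 2 * Real.log (Fintype.card Ω) + Real.log ε⁻¹) ≤ t) :
    dTV (fun y => (P ^ t) x y) (fun _ => (Fintype.card Ω : ℝ)⁻¹) ≤ ε := by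
  have hN : (0 : ℝ) < Fintype.card Ω := by
    exact_mod_cast Fintype.card_pos_iff.mpr ⟨x⟩
  set N : ℝ := (Fintype.card Ω : ℝ) with hNdef
  have hsum : ∀ t : ℕ, ∑ y, (P ^ t) x y = 1 := by
    intro t
    induction t with
    | zero => simp [Matrix.one_apply]
    | succ k ih =>
      simp_rw [pow_succ, Matrix.mul_apply]
      rw [Finset.sum_comm]
      simp_rw [← Finset.mul_sum, hr, mul_one, ih]
  have hmean : ∀ t : ℕ, ∑ y, ((P ^ t) x y - N⁻¹) = 0 := by
    intro t
    rw [Finset.sum_sub_distrib, hsum]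
    simp [← hNdef, hN.ne']
  have hc : 0 ≤ 1 - 2 / (3 * κ) := by
    rw [sub_nonneg, div_le_one (by positivity)]; linarith
  have hdecay : ∀ t : ℕ, ∑ y, ((P ^ t) x y - N⁻¹) ^ 2 ≤ (1 - 2 / (3 * κ)) ^ t := by
    intro t
    induction t with
    | zero =>
      have h1 : ∀ y, ((P ^ 0) x y - N⁻¹) ^ 2 = (if x = y then 1 - 2 * N⁻¹ else 0) + (N⁻¹) ^ 2 := by
        intro y
        rw [pow_zero, Matrix.one_apply]
        split_ifs <;> ring
      simp_rw [h1, Finset.sum_add_distrib]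
      simp [← hNdef]
      have : 0 < N⁻¹ := by positivity
      field_simp
      nlinarith
    | succ k ih =>
      have h2 := l2_contraction P hs hnn hr hd κ (by linarith) hP
        (fun y => (P ^ k) x y - N⁻¹) (hmean k)
      have h3 : ∀ y, (P ^ (k + 1)) x y - N⁻¹ = ∑ z, P y z * ((P ^ k) x z - N⁻¹) := by
        intro y
        simp_rw [mul_sub, Finset.sum_sub_distrib, ← Finset.sum_mul, hr, one_mul]
        rw [pow_succ, Matrix.mul_apply]
        congr 1
        refine Finset.sum_congr rfl fun z _ => ?_
        rw [hs z y]; ring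
      simp_rw [h3]
      refine h2.trans ?_
      rw [pow_succ']
      exact mul_le_mul_of_nonneg_left ih hc
  have hexp : (1 - 2 / (3 * κ)) ^ t ≤ Real.exp (-(2 / (3 * κ)) * t) := by
    rw [mul_comm (-(2 / (3 * κ))), Real.exp_nat_mul]
    refine pow_le_pow_left₀ hc ?_ _
    have := Real.add_one_le_exp (-(2 / (3 * κ)))
    linarith
  have hle : N * Real.exp (-(2 / (3 * κ)) * t) ≤ ε ^ 2 := by
    have h1 : N * Real.exp (-(2 / (3 * κ)) * t) =
        Real.exp (Real.log N + -(2 / (3 * κ)) * t) := by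
      rw [Real.exp_add, Real.exp_log hN]
    have h2 : ε ^ 2 = Real.exp (-2 * Real.log ε⁻¹) := by
      rw [Real.log_inv, ← Real.exp_log (pow_pos hε 2), Real.log_pow]
      congr 1; push_cast; ring
    rw [h1, h2, Real.exp_le_exp]
    have h3 : 2 / (3 * κ) * (3 * κ * (1 / 2 * Real.log N + Real.log ε⁻¹)) ≤ 2 / (3 * κ) * t :=
      mul_le_mul_of_nonneg_left ht (by positivity)
    have h4 : 2 / (3 * κ) * (3 * κ * (1 / 2 * Real.log N + Real.log ε⁻¹)) =
        Real.log N + 2 * Real.log ε⁻¹ := by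
      field_simp
    linarith
  have hcs : (∑ y, |(P ^ t) x y - N⁻¹|) ^ 2 ≤ N * ∑ y, ((P ^ t) x y - N⁻¹) ^ 2 := by
    have := sq_sum_le_card_mul_sum_sq (s := (Finset.univ : Finset Ω))
      (f := fun y => |(P ^ t) x y - N⁻¹|)
    simpa [sq_abs] using this
  have hfin : (∑ y, |(P ^ t) x y - N⁻¹|) ^ 2 ≤ ε ^ 2 :=
    hcs.trans ((mul_le_mul_of_nonneg_left ((hdecay t).trans hexp) hN.le).trans hle)
  have := (le_abs_self _).trans (abs_le_of_sq_le_sq hfin hε.le)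
  have h0 : 0 ≤ ∑ y, |(P ^ t) x y - N⁻¹| := Finset.sum_nonneg fun _ _ => abs_nonneg _
  unfold dTV
  linarith

lemma mixingTime_le (P : Matrix Ω Ω ℝ) (π : Ω → ℝ) (ε X : ℝ) (hX : 0 ≤ X)
    (h : ∀ x, ∀ t : ℕ, X ≤ t → dTV (fun y => (P ^ t) x y) π ≤ ε) :
    (mixingTime P π ε : ℝ) ≤ X + 1 := by
  have : mixingTime P π ε ≤ ⌈X⌉₊ := by
    refine Finset.sup_le fun x _ => Nat.sInf_le ?_
    intro t ht
    exact h x t ((Nat.le_ceil X).trans (by exact_mod_cast ht))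
  calc (mixingTime P π ε : ℝ) ≤ ⌈X⌉₊ := by exact_mod_cast this
    _ ≤ X + 1 := (Nat.ceil_lt_add_one hX).le

end MarkovChain

/-! ### Edge sets -/

/-- The neighbours of `y` in the graph with edge set `E`. -/
def nb (E : Finset (Sym2 (Fin n))) (y : Fin n) : Finset (Fin n) :=
  Finset.univ.filter fun z => s(y, z) ∈ E

@[simp] lemma mem_nb {E : Finset (Sym2 (Fin n))} {y z : Fin n} : z ∈ nb E y ↔ s(y, z) ∈ E := by
  simp [nb]

/-- `E` is the edge set of a simple graph with degree sequence `d`. -/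
def Realizes (d : Fin n → ℕ) (E : Finset (Sym2 (Fin n))) : Prop :=
  (∀ e ∈ E, ¬ e.IsDiag) ∧ ∀ y, (nb E y).card = d y

lemma card_nb_insert {E : Finset (Sym2 (Fin n))} {a b : Fin n} (hab : a ≠ b)
    (h : s(a, b) ∉ E) (y : Fin n) :
    (nb (insert s(a, b) E) y).card =
      (nb E y).card + (if y = a then 1 else 0) + (if y = b then 1 else 0) := by
  by_cases ha : y = a
  · subst ha
    have : nb (insert s(y, b) E) y = insert b (nb E y) := by
      ext z; simp only [mem_nb, Finset.mem_insert, Sym2.eq_iff]; grind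
    rw [this, Finset.card_insert_of_notMem (by simpa using h)]
    simp [hab]
  · by_cases hb : y = b
    · subst hb
      have : nb (insert s(a, y) E) y = insert a (nb E y) := by
        ext z; simp only [mem_nb, Finset.mem_insert, Sym2.eq_iff]; grind
      rw [this, Finset.card_insert_of_notMem (by rw [mem_nb, Sym2.eq_swap]; exact h)]
      simp [ha]
    · have : nb (insert s(a, b) E) y = nb E y := by
        ext z; simp only [mem_nb, Finset.mem_insert, Sym2.eq_iff]; grind
      simp [this, ha, hb]

lemma card_nb_erase {E : Finset (Sym2 (Fin n))} {a b : Fin n} (hab : a ≠ b)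
    (h : s(a, b) ∈ E) (y : Fin n) :
    (nb (E.erase s(a, b)) y).card + (if y = a then 1 else 0) + (if y = b then 1 else 0) =
      (nb E y).card := by
  rw [← card_nb_insert hab (Finset.notMem_erase _ _), Finset.insert_erase h]

lemma card_nb_disjoint_union {E E' : Finset (Sym2 (Fin n))} (h : Disjoint E E') (y : Fin n) :
    (nb (E ∪ E') y).card = (nb E y).card + (nb E' y).card := by
  rw [← Finset.card_union_of_disjoint]
  · congr 1; ext z; simp
  · rw [Finset.disjoint_left] at h ⊢
    intro z; simpa using fun hz => h hz

lemma card_incident {E : Finset (Sym2 (Fin n))} (y : Fin n) :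
    (E.filter fun e => y ∈ e).card = (nb E y).card := by
  symm
  refine Finset.card_bij (fun z _ => s(y, z)) ?_ ?_ ?_
  · intro z hz; simpa using hz
  · intro a _ b _ h; exact Sym2.congr_right.mp h
  · intro e he
    rw [Finset.mem_filter] at he
    obtain ⟨z, rfl⟩ := he.2
    exact ⟨z, by simpa using he.1, rfl⟩

lemma handshake {E : Finset (Sym2 (Fin n))} (h : ∀ e ∈ E, ¬ e.IsDiag) :
    ∑ y, (nb E y).card = 2 * E.card := by
  simp_rw [← card_incident, Finset.card_filter]
  rw [Finset.sum_comm]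
  have : ∀ e ∈ E, (∑ y : Fin n, if y ∈ e then 1 else 0) = 2 := by
    intro e he
    rw [← Finset.card_filter, ← Sym2.card_toFinset_of_not_isDiag e (h e he)]
    congr 1; ext; simp
  rw [Finset.sum_congr rfl this]
  simp [mul_comm]

/-- The edge set of a graph as a finset. -/
def es (G : SimpleGraph (Fin n)) : Finset (Sym2 (Fin n)) := Finset.univ.filter (· ∈ G.edgeSet)

@[simp] lemma mem_es {G : SimpleGraph (Fin n)} {e : Sym2 (Fin n)} : e ∈ es G ↔ e ∈ G.edgeSet := by
  simp [es]

lemma es_injective : Function.Injective (es (n := n)) := by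
  intro G G' h
  rw [← SimpleGraph.edgeSet_inj]
  ext e
  rw [← mem_es, h, mem_es]

lemma nb_es (G : SimpleGraph (Fin n)) (y : Fin n) : (nb (es G) y).card = {w | G.Adj y w}.ncard := by
  rw [Set.ncard_eq_toFinset_card']
  congr 1; ext z; simp

lemma realizes_es {d : Fin n → ℕ} {G : SimpleGraph (Fin n)} : Realizes d (es G) ↔ G ∈ Omega d := by
  unfold Realizes Omega
  simp only [nb_es, mem_es, Set.mem_ofPred_eq, and_iff_right_iff_imp]
  exact fun _ e he => G.not_isDiag_of_mem_edgeSet he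

lemma exists_es {d : Fin n → ℕ} {E : Finset (Sym2 (Fin n))} (h : Realizes d E) :
    ∃ G : OmegaType d, es G.1 = E := by
  have : es (SimpleGraph.fromEdgeSet (E : Set (Sym2 (Fin n)))) = E := by
    ext e
    simp only [mem_es, SimpleGraph.edgeSet_fromEdgeSet, Set.mem_sdiff, Finset.mem_coe]
    exact ⟨fun h => h.1, fun he => ⟨he, h.1 e he⟩⟩
  have hR : Realizes d (es (SimpleGraph.fromEdgeSet (E : Set (Sym2 (Fin n))))) := by
    rw [this]; exact h
  exact ⟨⟨_, realizes_es.mp hR⟩, this⟩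

/-! ### The transition matrix -/

lemma pairCount_eq (G : SimpleGraph (Fin n)) :
    pairCount G = (((es G).powersetCard 2).filter fun F =>
      ∀ e ∈ F, ∀ f ∈ F, e ≠ f → ∀ v : Fin n, v ∈ e → v ∉ f).card := by
  rw [← Set.ncard_coe_finset, ← Set.ncard_image_of_injective _ Finset.coe_injective]
  unfold pairCount
  congr 1
  ext F
  constructor
  · rintro ⟨h1, h2, h3⟩
    refine ⟨F.toFinset, ?_, by simp⟩
    simp only [Finset.coe_filter, Finset.mem_powersetCard, Set.mem_ofPred_eq]
    refine ⟨⟨fun e he => ?_, ?_⟩, fun e he f hf => h3 e (by simpa using he) f (by simpa using hf)⟩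
    · simpa using h1 (by simpa using he)
    · rw [← h2, Set.ncard_eq_toFinset_card']
  · rintro ⟨F, hF, rfl⟩
    simp only [Finset.coe_filter, Finset.mem_powersetCard, Set.mem_ofPred_eq] at hF
    refine ⟨fun e he => by simpa using hF.1.1 he, by rw [Set.ncard_coe_finset]; exact hF.1.2, ?_⟩
    exact fun e he f hf => hF.2 e (by simpa using he) f (by simpa using hf)

/-- The number of disjoint edge pairs depends on the degree sequence only: among all pairs of
edges, those sharing a vertex are counted by their (unique) common vertex. -/
lemma pairCount_add {d : Fin n → ℕ} {G : SimpleGraph (Fin n)} (hG : G ∈ Omega d) :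
    pairCount G + ∑ v, (d v).choose 2 = (es G).card.choose 2 := by
  have hR := realizes_es.mpr hG
  rw [← Finset.card_powersetCard, pairCount_eq,
    ← Finset.card_filter_add_card_filter_not (s := (es G).powersetCard 2)
      (fun F => ∀ e ∈ F, ∀ f ∈ F, e ≠ f → ∀ v : Fin n, v ∈ e → v ∉ f)]
  congr 1
  have hU : ((es G).powersetCard 2).filter (fun F =>
      ¬ ∀ e ∈ F, ∀ f ∈ F, e ≠ f → ∀ v : Fin n, v ∈ e → v ∉ f) =
      Finset.univ.biUnion fun v : Fin n => ((es G).filter fun e => v ∈ e).powersetCard 2 := by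
    ext F
    simp only [Finset.mem_filter, Finset.mem_powersetCard, Finset.mem_biUnion, Finset.mem_univ,
      true_and]
    constructor
    · rintro ⟨⟨h1, h2⟩, h3⟩
      push Not at h3
      obtain ⟨e, he, f, hf, hef, v, hve, hvf⟩ := h3
      refine ⟨v, fun g hg => ?_, h2⟩
      have : F = {e, f} := by
        symm
        refine Finset.eq_of_subset_of_card_le ?_ ?_
        · intro g hg; simp at hg; rcases hg with rfl | rfl <;> assumption
        · rw [h2, Finset.card_pair hef]
      rw [Finset.mem_filter]
      refine ⟨h1 hg, ?_⟩
      rw [this] at hg; simp at hg; rcases hg with rfl | rfl <;> assumption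
    · rintro ⟨v, h1, h2⟩
      refine ⟨⟨fun e he => (Finset.mem_filter.mp (h1 he)).1, h2⟩, ?_⟩
      obtain ⟨e, f, hef, rfl⟩ := Finset.card_eq_two.mp h2
      intro h
      exact h e (by simp) f (by simp) hef v (Finset.mem_filter.mp (h1 (by simp))).2
        (Finset.mem_filter.mp (h1 (by simp))).2
  rw [hU, Finset.card_biUnion]
  · refine Finset.sum_congr rfl fun v _ => ?_
    rw [Finset.card_powersetCard, card_incident, hR.2]
  · intro v _ w _ hvw
    rw [Function.onFun, Finset.disjoint_left]
    intro F h1 h2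
    rw [Finset.mem_powersetCard] at h1 h2
    obtain ⟨e, f, hef, rfl⟩ := Finset.card_eq_two.mp h1.2
    have a1 := (Finset.mem_filter.mp (h1.1 (Finset.mem_insert_self e {f}))).2
    have a2 := (Finset.mem_filter.mp (h2.1 (Finset.mem_insert_self e {f}))).2
    have a3 := (Finset.mem_filter.mp (h1.1 (by simp : f ∈ ({e, f} : Finset _)))).2
    have a4 := (Finset.mem_filter.mp (h2.1 (by simp : f ∈ ({e, f} : Finset _)))).2
    exact hef (((Sym2.mem_and_mem_iff hvw).mp ⟨a1, a2⟩).trans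
      ((Sym2.mem_and_mem_iff hvw).mp ⟨a3, a4⟩).symm)

lemma two_mul_card_es {d : Fin n → ℕ} {G : SimpleGraph (Fin n)} (hG : G ∈ Omega d) :
    2 * (es G).card = M d := by
  have hR := realizes_es.mpr hG
  rw [← handshake hR.1]
  exact Finset.sum_congr rfl fun v _ => hR.2 v

lemma pairCount_congr {d : Fin n → ℕ} (G G' : OmegaType d) : pairCount G.1 = pairCount G'.1 := by
  have h1 := pairCount_add G.2
  have h2 := pairCount_add G'.2
  have h3 := two_mul_card_es G.2
  have h4 := two_mul_card_es G'.2
  have : (es G.1).card = (es G'.1).card := by omega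
  rw [this] at h1
  omega

lemma pairCount_le {d : Fin n → ℕ} (G : OmegaType d) : 8 * pairCount G.1 ≤ M d ^ 2 := by
  have h1 := pairCount_add G.2
  rw [← two_mul_card_es G.2]
  have h2 : pairCount G.1 ≤ (es G.1).card.choose 2 := by omega
  have h3 : (es G.1).card.choose 2 * 2 ≤ (es G.1).card ^ 2 := by
    rw [Nat.choose_two_right, sq]
    exact (Nat.div_mul_le_self _ _).trans (Nat.mul_le_mul_left _ (Nat.sub_le _ _))
  nlinarith

lemma switch_data_symm {G G' : SimpleGraph (Fin n)} {F F' : Set (Sym2 (Fin n))}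
    (h : IsDisjointEdgePair G F ∧ IsPerfectMatchingOn (supp F) F' ∧
      F' ∩ (G.edgeSet \ F) = ∅ ∧ G'.edgeSet = (G.edgeSet \ F) ∪ F') :
    IsDisjointEdgePair G' F' ∧ IsPerfectMatchingOn (supp F') F ∧
      F ∩ (G'.edgeSet \ F') = ∅ ∧ G.edgeSet = (G'.edgeSet \ F') ∪ F := by
  obtain ⟨⟨a1, a2, a3⟩, ⟨b1, b2, b3, b4⟩, c, e⟩ := h
  have hd : G'.edgeSet \ F' = G.edgeSet \ F := by
    rw [e]
    ext x
    have : x ∈ F' → x ∉ G.edgeSet \ F := fun h1 h2 => by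
      have : x ∈ F' ∩ (G.edgeSet \ F) := ⟨h1, h2⟩
      rw [c] at this; exact this
    simp only [Set.mem_sdiff, Set.mem_union] at *
    tauto
  refine ⟨⟨?_, b1, b4⟩, ⟨a2, ?_, b3.symm, a3⟩, ?_, ?_⟩
  · rw [e]; exact Set.subset_union_right
  · exact fun x hx => G.not_isDiag_of_mem_edgeSet (a1 hx)
  · rw [hd]; ext x; simp
  · rw [hd]; exact (Set.sdiff_union_of_subset a1).symm

lemma switchCount_symm (G G' : SimpleGraph (Fin n)) : switchCount G G' = switchCount G' G := by
  unfold switchCount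
  rw [← Set.ncard_image_of_injective _ (Prod.swap_injective
    (α := Set (Sym2 (Fin n))) (β := Set (Sym2 (Fin n))))]
  congr 1
  ext ⟨F, F'⟩
  simp only [Set.image_swap_eq_preimage_swap, Set.mem_preimage, Set.mem_ofPred_eq, Prod.fst_swap,
    Prod.snd_swap]
  exact ⟨switch_data_symm, switch_data_symm⟩

/-- Apart from `F` itself there are two perfect matchings on the endvertices of `F`. -/
lemma matchings_card_le {G : SimpleGraph (Fin n)} {F : Set (Sym2 (Fin n))}
    (hF : IsDisjointEdgePair G F) :
    (Finset.univ.filter fun F' => IsPerfectMatchingOn (supp F) F' ∧ F' ≠ F).card ≤ 2 := by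
  obtain ⟨h1, h2, h3⟩ := hF
  obtain ⟨e, f, hef, rfl⟩ := Set.ncard_eq_two.mp h2
  induction e using Sym2.ind with | _ x y
  induction f using Sym2.ind with | _ z w
  have hsub : (Finset.univ.filter fun F' =>
      IsPerfectMatchingOn (supp {s(x, y), s(z, w)}) F' ∧ F' ≠ {s(x, y), s(z, w)}) ⊆
      {{s(x, z), s(y, w)}, {s(x, w), s(y, z)}} := by
    intro F' hF'
    simp only [Finset.mem_filter, Finset.mem_univ, true_and] at hF'
    obtain ⟨⟨b1, b2, b3, b4⟩, hne⟩ := hF'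
    obtain ⟨e, f, hef', rfl⟩ := Set.ncard_eq_two.mp b1
    have d1 := b2 e (by simp)
    have d2 := b2 f (by simp)
    have d3 := b4 e (by simp) f (by simp) hef'
    have hx : (x ∈ e ∨ x ∈ f) ∧ (y ∈ e ∨ y ∈ f) ∧ (z ∈ e ∨ z ∈ f) ∧ (w ∈ e ∨ w ∈ f) := by
      refine ⟨?_, ?_, ?_, ?_⟩
      all_goals
        have : ∀ v, v ∈ supp {s(x, y), s(z, w)} → v ∈ e ∨ v ∈ f := by
          intro v hv; rw [← b3] at hv; simpa [supp] using hv
        exact this _ (by simp [supp])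
    have hxy : x ≠ y := by
      have := G.not_isDiag_of_mem_edgeSet (h1 (by simp : s(x, y) ∈ _)); simpa using this
    have hzw : z ≠ w := by
      have := G.not_isDiag_of_mem_edgeSet (h1 (by simp : s(z, w) ∈ _)); simpa using this
    have hdis := h3 s(x, y) (by simp) s(z, w) (by simp) hef
    have k1 := hdis x (by simp)
    have k2 := hdis y (by simp)
    simp only [Sym2.mem_iff, not_or] at k1 k2
    clear b1 b2 b3 b4 h1 h2 h3 hdis
    have hm : ∀ e : Sym2 (Fin n), ¬ e.IsDiag → ∀ p q : Fin n, p ≠ q → p ∈ e → q ∈ e →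
      e = s(p, q) := fun e _ p q hpq hp hq => (Sym2.mem_and_mem_iff hpq).mp ⟨hp, hq⟩
    have hthree : ∀ e : Sym2 (Fin n), ∀ p q r : Fin n, p ≠ q → p ≠ r → q ≠ r →
        p ∈ e → q ∈ e → r ∈ e → False := by
      intro e p q r hpq hpr hqr hp hq hr
      have := (Sym2.mem_and_mem_iff hpq).mp ⟨hp, hq⟩
      rw [this] at hr; simp at hr; grind
    simp only [Finset.mem_insert, Finset.mem_singleton]
    obtain ⟨m1, m2, m3, m4⟩ := hx
    have key : ∀ e f : Sym2 (Fin n), ¬ e.IsDiag → ¬ f.IsDiag → (∀ v, v ∈ e → v ∉ f) →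
        x ∈ e → (y ∈ e ∨ y ∈ f) → (z ∈ e ∨ z ∈ f) → (w ∈ e ∨ w ∈ f) →
        ({e, f} : Set _) ≠ {s(x, y), s(z, w)} →
        ({e, f} : Set _) = {s(x, z), s(y, w)} ∨ ({e, f} : Set _) = {s(x, w), s(y, z)} := by
      intro e f d1 d2 d3 m1 m2 m3 m4 hne
      rcases m2 with m2 | m2
      · have n3 : z ∈ f := m3.resolve_left fun h => hthree e x y z hxy k1.1 k2.1 m1 m2 h
        have n4 : w ∈ f := m4.resolve_left fun h => hthree e x y w hxy k1.2 k2.2 m1 m2 h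
        exact absurd (by rw [hm e d1 x y hxy m1 m2, hm f d2 z w hzw n3 n4]) hne
      · rcases m3 with m3 | m3
        · have n4 : w ∈ f := m4.resolve_left fun h => hthree e x z w k1.1 k1.2 hzw m1 m3 h
          left; rw [hm e d1 x z k1.1 m1 m3, hm f d2 y w k2.2 m2 n4]
        · have n4 : w ∈ e := m4.resolve_right fun h => hthree f y z w k2.1 k2.2 hzw m2 m3 h
          right; rw [hm e d1 x w k1.2 m1 n4, hm f d2 y z k2.1 m2 m3]
    rcases m1 with m1 | m1
    · exact key e f d1 d2 d3 m1 m2 m3 m4 hne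
    · rw [Set.pair_comm e f] at hne ⊢
      exact key f e d2 d1 (fun v hv hv' => d3 v hv' hv) m1 m2.symm m3.symm m4.symm hne
  exact (Finset.card_le_card hsub).trans Finset.card_le_two

lemma sum_switchCount_le {d : Fin n → ℕ} (G : OmegaType d) :
    ∑ H : OmegaType d, (if H = G then 0 else switchCount G.1 H.1) ≤ 2 * pairCount G.1 := by
  set S : OmegaType d → Finset (Set (Sym2 (Fin n)) × Set (Sym2 (Fin n))) := fun H =>
    if H = G then ∅ else Finset.univ.filter fun FF =>
      IsDisjointEdgePair G.1 FF.1 ∧ IsPerfectMatchingOn (supp FF.1) FF.2 ∧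
      FF.2 ∩ (G.1.edgeSet \ FF.1) = ∅ ∧ H.1.edgeSet = (G.1.edgeSet \ FF.1) ∪ FF.2 with hS
  have h1 : ∀ H, (if H = G then 0 else switchCount G.1 H.1) = (S H).card := by
    intro H
    simp only [hS]
    split_ifs
    · simp
    · unfold switchCount
      rw [Set.ncard_eq_toFinset_card']
      congr 1; ext; simp
  simp_rw [h1]
  rw [← Finset.card_biUnion]
  · set Fs : Finset (Set (Sym2 (Fin n))) := Finset.univ.filter fun F => IsDisjointEdgePair G.1 F
      with hFs
    have hc : Fs.card = pairCount G.1 := by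
      unfold pairCount
      rw [Set.ncard_eq_toFinset_card']
      congr 1; ext; simp [hFs]
    have hsub : Finset.univ.biUnion S ⊆ Fs.biUnion fun F =>
        (Finset.univ.filter fun F' => IsPerfectMatchingOn (supp F) F' ∧ F' ≠ F).image
          fun F' => (F, F') := by
      rintro ⟨F, F'⟩ h
      simp only [Finset.mem_biUnion, Finset.mem_univ, true_and, hS] at h
      obtain ⟨H, hH⟩ := h
      split_ifs at hH with hHG
      · simp at hH
      · simp only [Finset.mem_filter, Finset.mem_univ, true_and] at hH
        simp only [Finset.mem_biUnion, hFs, Finset.mem_filter, Finset.mem_univ, true_and,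
          Finset.mem_image, Prod.mk.injEq]
        refine ⟨F, hH.1, F', ⟨hH.2.1, ?_⟩, rfl, rfl⟩
        rintro rfl
        apply hHG
        apply Subtype.ext
        rw [← SimpleGraph.edgeSet_inj, hH.2.2.2, Set.sdiff_union_of_subset hH.1.1]
    refine (Finset.card_le_card hsub).trans ?_
    rw [mul_comm, ← hc]
    refine Finset.card_biUnion_le_card_mul _ _ _ fun F hF => ?_
    refine Finset.card_image_le.trans (matchings_card_le (G := G.1) ?_)
    simpa [hFs] using hF
  · intro H _ H' _ hne
    rw [Function.onFun, Finset.disjoint_left]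
    rintro ⟨F, F'⟩ h h'
    simp only [hS] at h h'
    split_ifs at h h' with a b
    · simp at h
    · simp at h
    · simp at h'
    · simp only [Finset.mem_filter, Finset.mem_univ, true_and] at h h'
      apply hne
      apply Subtype.ext
      rw [← SimpleGraph.edgeSet_inj, h.2.2.2, h'.2.2.2]

lemma transP_symm {d : Fin n → ℕ} (G G' : OmegaType d) : transP d G G' = transP d G' G := by
  unfold transP
  by_cases h : G = G'
  · subst h; rfl
  · rw [if_neg h, if_neg (Ne.symm h), switchCount_symm, pairCount_congr G G']

lemma transP_row {d : Fin n → ℕ} (G : OmegaType d) : ∑ G', transP d G G' = 1 := by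
  have : ∀ G', transP d G G' = (if G = G' then 1 - ∑ H : OmegaType d,
        (if H = G then 0 else (switchCount G.1 H.1 : ℝ) / (3 * pairCount G.1)) else 0) +
      (if G' = G then 0 else (switchCount G.1 G'.1 : ℝ) / (3 * pairCount G.1)) := by
    intro G'
    unfold transP
    by_cases h : G = G'
    · simp [h]
    · simp [h, Ne.symm h]
  simp_rw [this, Finset.sum_add_distrib]
  simp

lemma transP_diag {d : Fin n → ℕ} (G : OmegaType d) : 1 / 3 ≤ transP d G G := by
  unfold transP
  rw [if_pos rfl]
  have h1 : ∑ H : OmegaType d,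
      (if H = G then 0 else (switchCount G.1 H.1 : ℝ) / (3 * pairCount G.1)) =
      ((∑ H : OmegaType d, (if H = G then 0 else switchCount G.1 H.1) : ℕ) : ℝ) /
        (3 * pairCount G.1) := by
    push_cast
    rw [Finset.sum_div]
    refine Finset.sum_congr rfl fun H _ => ?_
    split_ifs <;> simp
  rw [h1]
  have h2 : ((∑ H : OmegaType d, (if H = G then 0 else switchCount G.1 H.1) : ℕ) : ℝ) ≤
      2 * pairCount G.1 := by exact_mod_cast sum_switchCount_le G
  have h3 : ((∑ H : OmegaType d, (if H = G then 0 else switchCount G.1 H.1) : ℕ) : ℝ) /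
        (3 * pairCount G.1) ≤ 2 / 3 := by
    refine div_le_of_le_mul₀ (by positivity) (by norm_num) ?_
    linarith
  linarith

lemma transP_nonneg {d : Fin n → ℕ} (G G' : OmegaType d) : 0 ≤ transP d G G' := by
  by_cases h : G = G'
  · subst h; linarith [transP_diag G]
  · unfold transP; rw [if_neg h]; positivity

/-- The state space has at most `M ^ M` elements: list the neighbours of each vertex. -/
lemma card_omega_le {d : Fin n → ℕ} (hd : ∀ v, 1 ≤ d v) :
    Fintype.card (OmegaType d) ≤ M d ^ M d := by
  have hn : n ≤ M d := by
    have := Finset.sum_le_sum fun v (_ : v ∈ Finset.univ) => hd v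
    simpa [M] using this
  have hcard : ∀ (G : OmegaType d) (v : Fin n), (nb (es G.1) v).card = d v :=
    fun G v => (realizes_es.mpr G.2).2 v
  let c : OmegaType d → ((Σ v : Fin n, Fin (d v)) → Fin n) := fun G p =>
    ((nb (es G.1) p.1).equivFinOfCardEq (hcard G p.1)).symm p.2
  have hinj : Function.Injective c := by
    intro G G' h
    apply Subtype.ext
    have hnb : ∀ (G : OmegaType d) v w, G.1.Adj v w ↔ ∃ i, c G ⟨v, i⟩ = w := by
      intro G v w
      constructor
      · intro hvw
        have : w ∈ nb (es G.1) v := by simpa using hvw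
        exact ⟨(nb (es G.1) v).equivFinOfCardEq (hcard G v) ⟨w, this⟩, by simp [c]⟩
      · rintro ⟨i, rfl⟩
        have := (((nb (es G.1) v).equivFinOfCardEq (hcard G v)).symm i).2
        rw [mem_nb, mem_es, SimpleGraph.mem_edgeSet] at this
        exact this
    ext v w
    rw [hnb, hnb, h]
  calc Fintype.card (OmegaType d) ≤ Fintype.card ((Σ v : Fin n, Fin (d v)) → Fin n) :=
        Fintype.card_le_of_injective c hinj
    _ = n ^ M d := by simp [M]
    _ ≤ M d ^ M d := Nat.pow_le_pow_left hn _

/-- `B` arises from `A` by replacing the edges `xy`, `zw` by `xz`, `yw`. -/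
def Switch (A B : Finset (Sym2 (Fin n))) : Prop :=
  ∃ x y z w : Fin n, x ≠ y ∧ x ≠ z ∧ x ≠ w ∧ y ≠ z ∧ y ≠ w ∧ z ≠ w ∧
    s(x, y) ∈ A ∧ s(z, w) ∈ A ∧ s(x, z) ∉ A ∧ s(y, w) ∉ A ∧
    B = insert s(x, z) (insert s(y, w) ((A.erase s(x, y)).erase s(z, w)))

lemma Switch.symm {A B : Finset (Sym2 (Fin n))} (h : Switch A B) : Switch B A := by
  obtain ⟨x, y, z, w, h1, h2, h3, h4, h5, h6, a1, a2, a3, a4, rfl⟩ := h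
  have n1 : s(x, y) ≠ s(x, z) := by simp; grind
  have n2 : s(x, y) ≠ s(y, w) := by simp; grind
  have n3 : s(z, w) ≠ s(x, z) := by simp; grind
  have n4 : s(z, w) ≠ s(y, w) := by simp; grind
  have n5 : s(x, z) ≠ s(y, w) := by simp; grind
  have n6 : s(x, y) ≠ s(z, w) := by simp; grind
  refine ⟨x, z, y, w, h2, h1, h3, h4.symm, h6, h5, by simp, by simp, ?_, ?_, ?_⟩
  · simp [n1, n2]
  · simp [n3, n4]
  · ext e
    generalize s(x, y) = e1 at *
    generalize s(z, w) = e2 at *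
    generalize s(x, z) = e3 at *
    generalize s(y, w) = e4 at *
    simp only [Finset.mem_insert, Finset.mem_erase]
    grind

lemma Switch.realizes {d : Fin n → ℕ} {A B : Finset (Sym2 (Fin n))} (h : Switch A B)
    (hA : Realizes d A) : Realizes d B := by
  obtain ⟨x, y, z, w, h1, h2, h3, h4, h5, h6, a1, a2, a3, a4, rfl⟩ := h
  have n5 : s(x, z) ≠ s(y, w) := by simp; grind
  have n6 : s(z, w) ≠ s(x, y) := by simp; grind
  refine ⟨?_, fun v => ?_⟩
  · intro e he
    simp only [Finset.mem_insert, Finset.mem_erase] at he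
    rcases he with rfl | rfl | he
    · simpa using h2
    · simpa using h5
    · exact hA.1 e he.2.2
  · rw [card_nb_insert h2 (by simp [n5, a3]), card_nb_insert h5 (by simp [a4])]
    have e1 := card_nb_erase h6 (Finset.mem_erase.mpr ⟨n6, a2⟩) v
    have e2 := card_nb_erase h1 a1 v
    rw [← hA.2 v]
    omega

lemma transP_switch {d : Fin n → ℕ} (G G' : OmegaType d) (h : Switch (es G.1) (es G'.1)) :
    1 ≤ 3 / 8 * (M d : ℝ) ^ 2 * transP d G G' := by
  have hne : G ≠ G' := by
    rintro rfl
    obtain ⟨x, y, z, w, h1, h2, h3, h4, h5, h6, a1, a2, a3, a4, h⟩ := h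
    exact a3 (h ▸ by simp)
  have hsc : 1 ≤ switchCount G.1 G'.1 := by
    obtain ⟨x, y, z, w, h1, h2, h3, h4, h5, h6, a1, a2, a3, a4, h⟩ := h
    have n5 : s(x, z) ≠ s(y, w) := by simp; grind
    have n6 : s(x, y) ≠ s(z, w) := by simp; grind
    rw [Nat.one_le_iff_ne_zero, ← Nat.pos_iff_ne_zero]
    unfold switchCount
    rw [Set.ncard_pos]
    refine ⟨({s(x, y), s(z, w)}, {s(x, z), s(y, w)}), ⟨?_, ?_, ?_⟩, ⟨?_, ?_, ?_, ?_⟩, ?_, ?_⟩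
    · rintro e (rfl | rfl)
      · exact mem_es.mp a1
      · exact mem_es.mp a2
    · exact Set.ncard_pair n6
    · rintro e (rfl | rfl) f (rfl | rfl) hef v hv hv' <;> simp at hv hv' hef <;> grind
    · exact Set.ncard_pair n5
    · rintro e (rfl | rfl)
      · simpa using h2
      · simpa using h5
    · ext v; simp [supp]; tauto
    · rintro e (rfl | rfl) f (rfl | rfl) hef v hv hv' <;> simp at hv hv' hef <;> grind
    · ext e
      simp only [Set.mem_inter_iff, Set.mem_insert_iff, Set.mem_singleton_iff, Set.mem_sdiff,
        Set.mem_empty_iff_false, iff_false, not_and, not_or]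
      rintro (rfl | rfl) he
      · exact absurd (mem_es.mpr he) a3
      · exact absurd (mem_es.mpr he) a4
    · ext e
      rw [← mem_es, h]
      simp only [Finset.mem_insert, Finset.mem_erase, mem_es, Set.mem_union, Set.mem_sdiff,
        Set.mem_insert_iff, Set.mem_singleton_iff]
      tauto
  have hpos : 0 < pairCount G.1 := by
    by_contra hp
    have h0 : pairCount G.1 = 0 := by omega
    have := Finset.single_le_sum (f := fun H : OmegaType d => if H = G then 0
      else switchCount G.1 H.1) (fun _ _ => Nat.zero_le _) (Finset.mem_univ G')
    have h2 := sum_switchCount_le G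
    simp only [if_neg hne.symm] at this
    omega
  unfold transP
  rw [if_neg hne]
  have hp : (0 : ℝ) < pairCount G.1 := by exact_mod_cast hpos
  have h8 : (8 : ℝ) * pairCount G.1 ≤ (M d : ℝ) ^ 2 := by exact_mod_cast pairCount_le G
  have hs : (1 : ℝ) ≤ switchCount G.1 G'.1 := by exact_mod_cast hsc
  rw [mul_div_assoc', le_div_iff₀ (by positivity)]
  nlinarith

/-! ### Near-states and their completions -/

/-- `(K, u, v)` is a near-state: `K` is a simple edge set whose degrees fall short of `d` by one
at `u` and by one at `v` (by two if `u = v`). -/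
def Near (d : Fin n → ℕ) (K : Finset (Sym2 (Fin n))) (u v : Fin n) : Prop :=
  (∀ e ∈ K, ¬ e.IsDiag) ∧
    ∀ y, (nb K y).card + (if y = u then 1 else 0) + (if y = v then 1 else 0) = d y

/-- The edge `ab` of `K` can be replaced by `ua` and `vb`. -/
def Spare (K : Finset (Sym2 (Fin n))) (u v a b : Fin n) : Prop :=
  s(a, b) ∈ K ∧ a ≠ b ∧ s(u, a) ∉ K ∧ s(v, b) ∉ K ∧ u ≠ a ∧ v ≠ b ∧ v ≠ a ∧ u ≠ b

/-- The completion of the near-state `(K, u, v)` along the spare edge `ab`. -/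
def compl (K : Finset (Sym2 (Fin n))) (u v a b : Fin n) : Finset (Sym2 (Fin n)) :=
  insert s(u, a) (insert s(v, b) (K.erase s(a, b)))

/-- `A` is a completion of the near-state `N`. -/
def IsComp (N : Finset (Sym2 (Fin n)) × Fin n × Fin n) (A : Finset (Sym2 (Fin n))) : Prop :=
  ∃ a b, Spare N.1 N.2.1 N.2.2 a b ∧ A = compl N.1 N.2.1 N.2.2 a b

lemma Spare.realizes {d : Fin n → ℕ} {K : Finset (Sym2 (Fin n))} {u v a b : Fin n}
    (hN : Near d K u v) (h : Spare K u v a b) : Realizes d (compl K u v a b) := by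
  obtain ⟨h1, h2, h3, h4, h5, h6, h7, h8⟩ := h
  have n1 : s(u, a) ≠ s(v, b) := by simp; grind
  refine ⟨?_, fun y => ?_⟩
  · intro e he
    simp only [compl, Finset.mem_insert, Finset.mem_erase] at he
    rcases he with rfl | rfl | he
    · simpa using h5
    · simpa using h6
    · exact hN.1 e he.2
  · unfold compl
    rw [card_nb_insert h5 (by simp [n1, h3]), card_nb_insert h6 (by simp [h4])]
    have e1 := card_nb_erase h2 h1 y
    have e2 := hN.2 y
    omega

lemma Spare.switch_close {K : Finset (Sym2 (Fin n))} {u v a b : Fin n}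
    (h : Spare K u v a b) (huv : u ≠ v) (hK : s(u, v) ∉ K) :
    Switch (compl K u v a b) (insert s(u, v) K) := by
  obtain ⟨h1, h2, h3, h4, h5, h6, h7, h8⟩ := h
  have n1 : s(u, a) ≠ s(v, b) := by simp; grind
  have n2 : s(u, v) ≠ s(v, b) := by simp; grind
  have n3 : s(u, v) ≠ s(u, a) := by simp; grind
  have n4 : s(a, b) ≠ s(u, a) := by simp; grind
  have n5 : s(a, b) ≠ s(v, b) := by simp; grind
  refine ⟨u, a, v, b, h5, huv, h8, h7.symm, h2, h6, by simp [compl], by simp [compl], ?_, ?_, ?_⟩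
  · simp only [compl, Finset.mem_insert, Finset.mem_erase]; grind
  · simp only [compl, Finset.mem_insert, Finset.mem_erase]; grind
  · ext e
    simp only [compl, Finset.mem_insert, Finset.mem_erase]; grind

/-- Two completions along sufficiently independent spare edges are two switches apart. -/
lemma Spare.switch_change {K : Finset (Sym2 (Fin n))} {u v a b a₀ b₀ : Fin n}
    (h₀ : Spare K u v a₀ b₀) (h : Spare K u v a b) (h1 : a ≠ a₀) (h2 : a ≠ b₀) (h3 : b ≠ a₀)
    (h4 : b ≠ b₀) (h5 : s(a₀, b) ∉ K) :
    ∃ A, Switch (compl K u v a₀ b₀) A ∧ Switch A (compl K u v a b) := by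
  obtain ⟨p1, p2, p3, p4, p5, p6, p7, p8⟩ := h₀
  obtain ⟨q1, q2, q3, q4, q5, q6, q7, q8⟩ := h
  have n1 : s(u, a₀) ≠ s(v, b₀) := by simp; grind
  have n2 : s(u, a) ≠ s(v, b) := by simp; grind
  have n3 : s(a, b) ≠ s(a₀, b₀) := by simp; grind
  have n4 : s(u, a) ≠ s(u, a₀) := by simp; grind
  have n5 : s(u, a) ≠ s(v, b₀) := by simp; grind
  have n6 : s(a₀, b) ≠ s(u, a₀) := by simp; grind
  have n7 : s(a₀, b) ≠ s(v, b₀) := by simp; grind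
  have n8 : s(a₀, b) ≠ s(u, a) := by simp; grind
  have n9 : s(a₀, b) ≠ s(v, b) := by simp; grind
  have n10 : s(v, b) ≠ s(v, b₀) := by simp; grind
  have n11 : s(v, b) ≠ s(u, a₀) := by simp; grind
  have n12 : s(a₀, b₀) ≠ s(a₀, b) := by simp; grind
  refine ⟨insert s(u, a) (insert s(a₀, b) (((compl K u v a₀ b₀).erase s(u, a₀)).erase s(a, b))),
    ⟨u, a₀, a, b, p5, q5, q8, h1.symm, h3.symm, q2, ?_, ?_, ?_, ?_, rfl⟩,
    ⟨a₀, b, b₀, v, h3.symm, p2, p7.symm, h4, q6.symm, p6.symm, ?_, ?_, ?_, ?_, ?_⟩⟩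
  · simp [compl]
  · simp only [compl, Finset.mem_insert, Finset.mem_erase]; grind
  · simp only [compl, Finset.mem_insert, Finset.mem_erase]; grind
  · simp only [compl, Finset.mem_insert, Finset.mem_erase]; grind
  · simp
  · rw [Sym2.eq_swap (a := b₀)]
    simp only [compl, Finset.mem_insert, Finset.mem_erase]; grind
  · simp only [compl, Finset.mem_insert, Finset.mem_erase]; grind
  · rw [Sym2.eq_swap (a := b)]
    simp only [compl, Finset.mem_insert, Finset.mem_erase]; grind
  · rw [Sym2.eq_swap (a := b), Sym2.eq_swap (a := b₀)]
    ext e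
    simp only [compl, Finset.mem_insert, Finset.mem_erase]; grind

lemma Spare.switch_slide {K : Finset (Sym2 (Fin n))} {u v w x a b : Fin n}
    (h : Spare K u v a b) (hvw : s(v, w) ∉ K) (hwx : s(w, x) ∈ K) (hne : v ≠ w) (hvx : v ≠ x)
    (hwx' : w ≠ x) (hbx : s(x, b) ∉ K) (haw : a ≠ w) (hbw : b ≠ w) (hbx' : b ≠ x) :
    Spare (insert s(v, w) (K.erase s(w, x))) u x a b ∧
    Switch (compl K u v a b) (compl (insert s(v, w) (K.erase s(w, x))) u x a b) := by
  obtain ⟨q1, q2, q3, q4, q5, q6, q7, q8⟩ := h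
  have hxa : x ≠ a := by rintro rfl; exact hbx q1
  have n1 : s(u, a) ≠ s(v, b) := by simp; grind
  have n2 : s(u, a) ≠ s(v, w) := by simp; grind
  have n3 : s(x, b) ≠ s(v, w) := by simp; grind
  have n4 : s(a, b) ≠ s(w, x) := by simp; grind
  have n5 : s(x, b) ≠ s(u, a) := by simp; grind
  have n6 : s(x, b) ≠ s(v, b) := by simp; grind
  have n7 : s(v, w) ≠ s(v, b) := by simp; grind
  have n8 : s(a, b) ≠ s(v, w) := by simp; grind
  have n9 : s(a, b) ≠ s(u, a) := by simp; grind
  refine ⟨⟨?_, q2, ?_, ?_, q5, hbx'.symm, hxa, q8⟩,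
    ⟨v, b, w, x, q6, hne, hvx, hbw, hbx', hwx', ?_, ?_, ?_, ?_, ?_⟩⟩
  · simp only [Finset.mem_insert, Finset.mem_erase]; grind
  · simp only [Finset.mem_insert, Finset.mem_erase]; grind
  · simp only [Finset.mem_insert, Finset.mem_erase]; grind
  · simp [compl]
  · simp only [compl, Finset.mem_insert, Finset.mem_erase]; grind
  · simp only [compl, Finset.mem_insert, Finset.mem_erase]; grind
  · rw [Sym2.eq_swap (a := b)]
    simp only [compl, Finset.mem_insert, Finset.mem_erase]; grind
  · rw [Sym2.eq_swap (a := b)]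
    ext e
    simp only [compl, Finset.mem_insert, Finset.mem_erase]; grind

/-- The ordered pairs spanning an edge of `E`. -/
def darts (E : Finset (Sym2 (Fin n))) : Finset (Fin n × Fin n) :=
  Finset.univ.filter fun p => s(p.1, p.2) ∈ E

lemma card_darts (E : Finset (Sym2 (Fin n))) : (darts E).card = ∑ y, (nb E y).card := by
  rw [Finset.card_eq_sum_card_fiberwise (f := Prod.fst) (t := Finset.univ) (by simp)]
  refine Finset.sum_congr rfl fun y _ => ?_
  refine Finset.card_bij' (fun p _ => p.2) (fun z _ => (y, z)) ?_ ?_ ?_ ?_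
  · rintro ⟨a, b⟩ h; simp [darts] at h; obtain ⟨h, rfl⟩ := h; simpa using h
  · intro z hz; simpa [darts] using hz
  · rintro ⟨a, b⟩ h; simp [darts] at h; simp [h.2]
  · intro z hz; rfl

lemma dart_exists {E : Finset (Sym2 (Fin n))} {D : ℕ} (hD : ∀ y, (nb E y).card ≤ D)
    {X Y : Finset (Fin n)} (h : D * (X.card + Y.card) < ∑ y, (nb E y).card) :
    ∃ a b, s(a, b) ∈ E ∧ a ∉ X ∧ b ∉ Y := by
  by_contra hc
  push Not at hc
  have hsub : darts E ⊆ (X.biUnion fun a => (nb E a).image fun b => (a, b)) ∪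
      (Y.biUnion fun b => (nb E b).image fun a => (a, b)) := by
    rintro ⟨a, b⟩ hab
    simp only [darts, Finset.mem_filter, Finset.mem_univ, true_and] at hab
    simp only [Finset.mem_union, Finset.mem_biUnion, Finset.mem_image, mem_nb, Prod.mk.injEq]
    by_cases ha : a ∈ X
    · left; exact ⟨a, ha, b, hab, rfl, rfl⟩
    · right; exact ⟨b, hc a b hab ha, a, by rwa [Sym2.eq_swap], rfl, rfl⟩
  have h1 := Finset.card_le_card hsub
  rw [card_darts] at h1
  have h2 := Finset.card_union_le (X.biUnion fun a => (nb E a).image fun b => (a, b))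
    (Y.biUnion fun b => (nb E b).image fun a => (a, b))
  have h3 : (X.biUnion fun a => (nb E a).image fun b => (a, b)).card ≤ X.card * D :=
    Finset.card_biUnion_le_card_mul _ _ _ fun a _ => Finset.card_image_le.trans (hD a)
  have h4 : (Y.biUnion fun b => (nb E b).image fun a => (a, b)).card ≤ Y.card * D :=
    Finset.card_biUnion_le_card_mul _ _ _ fun a _ => Finset.card_image_le.trans (hD a)
  nlinarith

lemma Near.sum_nb {d : Fin n → ℕ} {K : Finset (Sym2 (Fin n))} {u v : Fin n} (h : Near d K u v) :
    ∑ y, (nb K y).card + 2 = M d := by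
  have : M d = ∑ y, ((nb K y).card + (if y = u then 1 else 0) + (if y = v then 1 else 0)) :=
    Finset.sum_congr rfl fun y _ => (h.2 y).symm
  rw [this, Finset.sum_add_distrib, Finset.sum_add_distrib]
  simp

lemma Near.nb_le {d : Fin n → ℕ} {K : Finset (Sym2 (Fin n))} {u v : Fin n} (h : Near d K u v)
    {D : ℕ} (hD : ∀ y, d y ≤ D) (y : Fin n) : (nb K y).card ≤ D := by
  have := h.2 y; have := hD y; omega

lemma Near.exists_spare {d : Fin n → ℕ} {D : ℕ} (hd : ∀ y, d y ≤ D) (hD3 : 3 ≤ D)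
    (hDM : 9 * D ^ 2 ≤ M d)
    {K : Finset (Sym2 (Fin n))} {u v : Fin n} (h : Near d K u v) :
    ∃ a b, Spare K u v a b := by
  have hs := h.sum_nb
  have hnb := h.nb_le hd
  obtain ⟨a, b, hab, ha, hb⟩ := dart_exists (X := insert u (nb K u)) (Y := insert v (nb K v))
    hnb (by
      have h1 := Finset.card_insert_le u (nb K u)
      have h2 := Finset.card_insert_le v (nb K v)
      have h3 := hnb u
      have h4 := hnb v
      have : D * ((insert u (nb K u)).card + (insert v (nb K v)).card) ≤ D * (2 * D + 2) :=
        Nat.mul_le_mul_left _ (by omega)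
      nlinarith)
  simp only [Finset.mem_insert, mem_nb, not_or] at ha hb
  refine ⟨a, b, hab, ?_, ha.2, hb.2, Ne.symm ha.1, Ne.symm hb.1, ?_, ?_⟩
  · have := h.1 _ hab; simpa using this
  · rintro rfl; exact hb.2 hab
  · rintro rfl; exact ha.2 (by rwa [Sym2.eq_swap])

/-! ### Energies -/

/-- All realizations of `d`, as edge sets. -/
def reals (d : Fin n → ℕ) : Finset (Finset (Sym2 (Fin n))) := Finset.univ.filter (Realizes d)

/-- All near-states. -/
def nears (d : Fin n → ℕ) : Finset (Finset (Sym2 (Fin n)) × Fin n × Fin n) :=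
  Finset.univ.filter fun N => Near d N.1 N.2.1 N.2.2

/-- The energy of `F` along the switches leaving `A`. -/
def en (d : Fin n → ℕ) (F : Finset (Sym2 (Fin n)) → ℝ) (A : Finset (Sym2 (Fin n))) : ℝ :=
  ∑ B ∈ (reals d).filter (Switch A), (F A - F B) ^ 2

/-- The energy of a near-state: that of all its completions. -/
def enN (d : Fin n → ℕ) (F : Finset (Sym2 (Fin n)) → ℝ)
    (N : Finset (Sym2 (Fin n)) × Fin n × Fin n) : ℝ :=
  ∑ A ∈ (reals d).filter (IsComp N), en d F A

lemma en_nonneg (d : Fin n → ℕ) (F : Finset (Sym2 (Fin n)) → ℝ) (A : Finset (Sym2 (Fin n))) :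
    0 ≤ en d F A := Finset.sum_nonneg fun _ _ => sq_nonneg _

lemma enN_nonneg (d : Fin n → ℕ) (F : Finset (Sym2 (Fin n)) → ℝ)
    (N : Finset (Sym2 (Fin n)) × Fin n × Fin n) : 0 ≤ enN d F N :=
  Finset.sum_nonneg fun _ _ => en_nonneg _ _ _

lemma abs_le_enN {d : Fin n → ℕ} (F : Finset (Sym2 (Fin n)) → ℝ)
    {N : Finset (Sym2 (Fin n)) × Fin n × Fin n} {A B : Finset (Sym2 (Fin n))}
    (hN : IsComp N A) (hA : Realizes d A) (h : Switch A B) :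
    |F A - F B| ≤ √(enN d F N) := by
  apply Real.abs_le_sqrt
  have h1 : (F A - F B) ^ 2 ≤ en d F A :=
    Finset.single_le_sum (f := fun B => (F A - F B) ^ 2) (fun _ _ => sq_nonneg _)
      (by simp [reals, h, h.realizes hA])
  exact h1.trans (Finset.single_le_sum (f := en d F) (fun _ _ => en_nonneg _ _ _)
    (by simp [reals, hN, hA]))

/-- A realization is the completion of at most `M ^ 2` near-states, since a completion together
with the two new edges, suitably oriented, determines the near-state. -/
lemma card_nears_of_comp {d : Fin n → ℕ} {A : Finset (Sym2 (Fin n))} (hA : Realizes d A) :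
    ((nears d).filter fun N => IsComp N A).card ≤ M d ^ 2 := by
  have hc : (darts A).card = M d := by
    rw [card_darts]; exact Finset.sum_congr rfl fun y _ => hA.2 y
  have hsub : ((nears d).filter fun N => IsComp N A) ⊆ (darts A ×ˢ darts A).image fun p =>
      (insert s(p.1.2, p.2.2) ((A.erase s(p.1.1, p.1.2)).erase s(p.2.1, p.2.2)),
        p.1.1, p.2.1) := by
    rintro ⟨K, u, v⟩ h
    obtain ⟨a, b, ⟨q1, q2, q3, q4, q5, q6, q7, q8⟩, hA⟩ := (Finset.mem_filter.mp h).2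
    simp only at q1 q2 q3 q4 q5 q6 q7 q8 hA
    refine Finset.mem_image.mpr ⟨((u, a), (v, b)), ?_, ?_⟩
    · simp [darts, hA, compl]
    · simp only [Prod.mk.injEq, and_true]
      rw [hA]
      ext e
      simp only [compl, Finset.mem_insert, Finset.mem_erase]; grind
  calc _ ≤ _ := Finset.card_le_card hsub
    _ ≤ _ := Finset.card_image_le
    _ = M d ^ 2 := by rw [Finset.card_product, hc, sq]

lemma sum_enN_le (d : Fin n → ℕ) (F : Finset (Sym2 (Fin n)) → ℝ) :
    ∑ N ∈ nears d, enN d F N ≤ (M d : ℝ) ^ 2 * ∑ A ∈ reals d, en d F A := by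
  unfold enN
  simp_rw [Finset.sum_filter]
  rw [Finset.sum_comm, Finset.mul_sum]
  refine Finset.sum_le_sum fun A hA => ?_
  rw [← Finset.sum_filter, Finset.sum_const, nsmul_eq_mul]
  refine mul_le_mul_of_nonneg_right ?_ (en_nonneg _ _ _)
  exact_mod_cast card_nears_of_comp (by simpa [reals] using hA)

lemma card_nears_le {d : Fin n → ℕ} {D : ℕ} (hd : ∀ y, d y ≤ D) (hD3 : 3 ≤ D)
    (hDM : 9 * D ^ 2 ≤ M d) : (nears d).card ≤ M d ^ 2 * (reals d).card := by
  have hsub : nears d ⊆ (reals d).biUnion fun A => (nears d).filter fun N => IsComp N A := by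
    intro N hN
    have hN' : Near d N.1 N.2.1 N.2.2 := by simpa [nears] using hN
    obtain ⟨a, b, hab⟩ := hN'.exists_spare hd hD3 hDM
    simp only [Finset.mem_biUnion, Finset.mem_filter]
    exact ⟨_, by simpa [reals] using hab.realizes hN', hN, a, b, hab, rfl⟩
  refine (Finset.card_le_card hsub).trans ?_
  rw [mul_comm]
  exact Finset.card_biUnion_le_card_mul _ _ _ fun A hA =>
    card_nears_of_comp (by simpa [reals] using hA)

/-! ### Local moves -/

/-- A fixed completion of each near-state (the empty set if there is none). -/
def Phi (N : Finset (Sym2 (Fin n)) × Fin n × Fin n) : Finset (Sym2 (Fin n)) :=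
  if h : ∃ A, IsComp N A then h.choose else ∅

lemma Phi_isComp {d : Fin n → ℕ} {D : ℕ} (hd : ∀ y, d y ≤ D) (hD3 : 3 ≤ D)
    (hDM : 9 * D ^ 2 ≤ M d) {K : Finset (Sym2 (Fin n))} {u v : Fin n} (h : Near d K u v) :
    IsComp (K, u, v) (Phi (K, u, v)) := by
  have h' : ∃ A, IsComp (K, u, v) A := by
    obtain ⟨a, b, hab⟩ := h.exists_spare hd hD3 hDM
    exact ⟨_, a, b, hab, rfl⟩
  unfold Phi
  rw [dif_pos h']
  exact h'.choose_spec

lemma IsComp.realizes {d : Fin n → ℕ} {K : Finset (Sym2 (Fin n))} {u v : Fin n}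
    {A : Finset (Sym2 (Fin n))} (h : Near d K u v) (hA : IsComp (K, u, v) A) : Realizes d A := by
  obtain ⟨a, b, hab, rfl⟩ := hA
  exact hab.realizes h

/-- If `uv ∉ K`, the completion of `(K, u, v)` is one switch away from `K + uv`. -/
lemma link_close {d : Fin n → ℕ} {D : ℕ} (hd : ∀ y, d y ≤ D) (hD3 : 3 ≤ D)
    (hDM : 9 * D ^ 2 ≤ M d) (F : Finset (Sym2 (Fin n)) → ℝ)
    {K : Finset (Sym2 (Fin n))} {u v : Fin n} (h : Near d K u v) (huv : u ≠ v)
    (hK : s(u, v) ∉ K) :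
    |F (Phi (K, u, v)) - F (insert s(u, v) K)| ≤ √(enN d F (K, u, v)) := by
  have hc := Phi_isComp hd hD3 hDM h
  refine abs_le_enN F hc (hc.realizes h) ?_
  obtain ⟨a, b, hab, he⟩ := hc
  rw [he]
  exact hab.switch_close huv hK

lemma link_change {d : Fin n → ℕ} (F : Finset (Sym2 (Fin n)) → ℝ)
    {K : Finset (Sym2 (Fin n))} {u v : Fin n} (hN : Near d K u v) {a b a₀ b₀ : Fin n}
    (h₀ : Spare K u v a₀ b₀) (h : Spare K u v a b) (h1 : a ≠ a₀) (h2 : a ≠ b₀) (h3 : b ≠ a₀)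
    (h4 : b ≠ b₀) (h5 : s(a₀, b) ∉ K) :
    |F (compl K u v a₀ b₀) - F (compl K u v a b)| ≤ 2 * √(enN d F (K, u, v)) := by
  obtain ⟨A, hA1, hA2⟩ := h₀.switch_change h h1 h2 h3 h4 h5
  have e1 := abs_le_enN F (N := (K, u, v)) ⟨a₀, b₀, h₀, rfl⟩ (h₀.realizes hN) hA1
  have e2 := abs_le_enN F (N := (K, u, v)) ⟨a, b, h, rfl⟩ (h.realizes hN) hA2.symm
  rw [abs_le] at *
  constructor <;> linarith [e1.1, e1.2, e2.1, e2.2]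

/-- Sliding the defect from `v` to `x` along `vw ∉ K`, `wx ∈ K` costs five switches. -/
lemma link_slide {d : Fin n → ℕ} {D : ℕ} (hd : ∀ y, d y ≤ D) (hD3 : 3 ≤ D)
    (hDM : 9 * D ^ 2 ≤ M d) (F : Finset (Sym2 (Fin n)) → ℝ)
    {K : Finset (Sym2 (Fin n))} {u v w x : Fin n} (hN : Near d K u v)
    (hN' : Near d (insert s(v, w) (K.erase s(w, x))) u x) (hvw : s(v, w) ∉ K)
    (hwx : s(w, x) ∈ K) (hne : v ≠ w) (hvx : v ≠ x) :
    |F (Phi (K, u, v)) - F (Phi (insert s(v, w) (K.erase s(w, x)), u, x))| ≤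
      3 * √(enN d F (K, u, v)) + 2 * √(enN d F (insert s(v, w) (K.erase s(w, x)), u, x)) := by
  have hwx' : w ≠ x := by have := hN.1 _ hwx; simpa using this
  obtain ⟨a₀, b₀, h₀, e₀⟩ := Phi_isComp hd hD3 hDM hN
  obtain ⟨a₁, b₁, h₁, e₁⟩ := Phi_isComp hd hD3 hDM hN'
  simp only at h₀ e₀ h₁ e₁
  have hs := hN.sum_nb
  have hnb := hN.nb_le hd
  obtain ⟨a, b, hab, ha, hb⟩ := dart_exists (X := nb K u ∪ {u, w, b₀, b₁})
    (Y := nb K v ∪ (nb K x ∪ (nb K a₀ ∪ (nb K a₁ ∪ {v, w, x, a₀, a₁, b₀, b₁})))) hnb (by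
      have c1 := Finset.card_union_le (nb K u) {u, w, b₀, b₁}
      have c2 := Finset.card_union_le (nb K v)
        (nb K x ∪ (nb K a₀ ∪ (nb K a₁ ∪ {v, w, x, a₀, a₁, b₀, b₁})))
      have c3 := Finset.card_union_le (nb K x) (nb K a₀ ∪ (nb K a₁ ∪ {v, w, x, a₀, a₁, b₀, b₁}))
      have c4 := Finset.card_union_le (nb K a₀) (nb K a₁ ∪ {v, w, x, a₀, a₁, b₀, b₁})
      have c5 := Finset.card_union_le (nb K a₁) {v, w, x, a₀, a₁, b₀, b₁}
      have c6 : ({u, w, b₀, b₁} : Finset (Fin n)).card ≤ 4 := Finset.card_le_four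
      have c7 : ({v, w, x, a₀, a₁, b₀, b₁} : Finset (Fin n)).card ≤ 7 := by
        refine (Finset.card_insert_le _ _).trans (Nat.succ_le_succ ?_)
        exact Finset.card_le_six
      have d1 := hnb u
      have d2 := hnb v
      have d3 := hnb x
      have d4 := hnb a₀
      have d5 := hnb a₁
      refine lt_of_le_of_lt (Nat.mul_le_mul_left D (m := 5 * D + 11) (by omega)) ?_
      nlinarith)
  simp only [Finset.mem_union, Finset.mem_insert, Finset.mem_singleton, mem_nb, not_or] at ha hb
  obtain ⟨f1, f2, f3, f4, f5⟩ := ha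
  obtain ⟨g1, g2, g3, g4, g5, g6, g7, g8, g9, g10, g11⟩ := hb
  have hne' : a ≠ b := by have := hN.1 _ hab; simpa using this
  have hsp : Spare K u v a b := by
    refine ⟨hab, hne', f1, g1, Ne.symm f2, Ne.symm g5, ?_, ?_⟩
    · rintro rfl; exact g1 hab
    · rintro rfl; exact f1 (by rwa [Sym2.eq_swap])
  obtain ⟨hsp', hsw⟩ := hsp.switch_slide hvw hwx hne hvx hwx' g2 f3 g6 g7
  have i1 := link_change F hN h₀ hsp (by rintro rfl; exact g3 hab) f4 g8 g10 g3
  have i2 := link_change F hN' h₁ hsp' (by rintro rfl; exact g4 hab) f5 g9 g11 (by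
    have : s(a₁, b) ≠ s(v, w) := by simp; grind
    simp [this, g4])
  have i3 := abs_le_enN F (N := (K, u, v)) ⟨a, b, hsp, rfl⟩ (hsp.realizes hN) hsw
  rw [e₀, e₁]
  rw [abs_le] at *
  constructor <;> linarith [i1.1, i1.2, i2.1, i2.2, i3.1, i3.2]

/-! ### Pairings -/

/-- `p` is an involution exchanging `X` and `Y` and fixing everything else. -/
def Pairing (X Y : Finset (Fin n)) (p : Fin n → Fin n) : Prop :=
  (∀ a ∈ X, p a ∈ Y) ∧ (∀ b ∈ Y, p b ∈ X) ∧ (∀ a, p (p a) = a) ∧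
    ∀ a, a ∉ X → a ∉ Y → p a = a

lemma card_pairing {X Y : Finset (Fin n)} (hd : Disjoint X Y) (hc : X.card = Y.card) :
    (Finset.univ.filter (Pairing X Y)).card = X.card.factorial := by
  have hXY : ∀ a, a ∈ X → a ∉ Y := fun a ha hb => Finset.disjoint_left.mp hd ha hb
  have e0 : X ≃ Y := Fintype.equivOfCardEq (by simpa using hc)
  have : Fintype.card (X ≃ Y) = X.card.factorial := by
    rw [Fintype.card_equiv e0, Fintype.card_coe]
  rw [← this, ← Finset.card_univ]
  refine Finset.card_bij (fun p hp => ?_) ?_ ?_ ?_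
  · have hp : Pairing X Y p := by simpa using hp
    exact ⟨fun a => ⟨p a, hp.1 a a.2⟩, fun b => ⟨p b, hp.2.1 b b.2⟩,
      fun a => Subtype.ext (hp.2.2.1 a), fun a => Subtype.ext (hp.2.2.1 a)⟩
  · intro p hp; simp
  · intro p hp p' hp' h
    have hp : Pairing X Y p := by simpa using hp
    have hp' : Pairing X Y p' := by simpa using hp'
    have hX : ∀ a ∈ X, p a = p' a := fun a ha =>
      congrArg Subtype.val (congrFun (congrArg (fun e : X ≃ Y => (e : X → Y)) h) ⟨a, ha⟩)
    funext a
    by_cases ha : a ∈ X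
    · exact hX a ha
    · by_cases hb : a ∈ Y
      · have := hX (p a) (hp.2.1 a hb)
        rw [hp.2.2.1] at this
        rw [← hp'.2.2.1 (p a), ← this]
      · rw [hp.2.2.2 a ha hb, hp'.2.2.2 a ha hb]
  · intro e _
    have hp : Pairing X Y (fun a => if ha : a ∈ X then (e ⟨a, ha⟩ : Fin n) else
        if hb : a ∈ Y then (e.symm ⟨a, hb⟩ : Fin n) else a) := by
      have h1 : ∀ a (ha : a ∈ X), (e ⟨a, ha⟩ : Fin n) ∉ X := fun a ha h => hXY _ h (e ⟨a, ha⟩).2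
      refine ⟨fun a ha => ?_, fun b hb => ?_, fun a => ?_, fun a ha hb => ?_⟩
      · simp only [dif_pos ha]; exact (e ⟨a, ha⟩).2
      · simp only [dif_neg (fun h => hXY b h hb), dif_pos hb]; exact (e.symm ⟨b, hb⟩).2
      · by_cases ha : a ∈ X
        · simp only [dif_pos ha, dif_neg (h1 a ha), dif_pos (e ⟨a, ha⟩).2]; simp
        · by_cases hb : a ∈ Y
          · simp only [dif_neg ha, dif_pos hb, dif_pos (e.symm ⟨a, hb⟩).2]; simp
          · simp [ha, hb]
      · simp [ha, hb]
    refine ⟨_, Finset.mem_filter.mpr ⟨Finset.mem_univ _, hp⟩, ?_⟩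
    ext a
    simp

/-- All systems of pairings of `X y` with `Y y`, one for each vertex `y`. -/
def pairs (X Y : Fin n → Finset (Fin n)) : Finset (Fin n → Fin n → Fin n) :=
  Fintype.piFinset fun y => Finset.univ.filter (Pairing (X y) (Y y))

lemma mem_pairs {X Y : Fin n → Finset (Fin n)} {ψ : Fin n → Fin n → Fin n} :
    ψ ∈ pairs X Y ↔ ∀ y, Pairing (X y) (Y y) (ψ y) := by
  simp [pairs]

lemma card_pairs {X Y : Fin n → Finset (Fin n)} (hd : ∀ y, Disjoint (X y) (Y y))
    (hc : ∀ y, (X y).card = (Y y).card) : (pairs X Y).card = ∏ y, (X y).card.factorial := by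
  rw [pairs, Fintype.card_piFinset]
  exact Finset.prod_congr rfl fun y _ => card_pairing (hd y) (hc y)

/-! ### Trails determined by a system of pairings -/

/-- A dart is an ordered pair `(a, b)`, thought of as a directed edge; the trail determined by `ψ`
leaves `b` along the edge paired with `ab`. -/
def step (ψ : Fin n → Fin n → Fin n) (y : Fin n × Fin n) : Fin n × Fin n := (y.2, ψ y.2 y.1)

/-- An injective numbering of darts. -/
def code (y : Fin n × Fin n) : ℕ := (finProdFinEquiv y : ℕ)

lemma code_injective : Function.Injective (code (n := n)) :=
  Fin.val_injective.comp finProdFinEquiv.injective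

lemma code_lt (y : Fin n × Fin n) : code y < n * n := (finProdFinEquiv y).2

/-- The name of the closed trail through `y`: the smallest number of a dart on it. -/
def mo (ψ : Fin n → Fin n → Fin n) (y : Fin n × Fin n) : ℕ :=
  sInf (Set.range fun m => code ((step ψ)^[m] y))

/-- The darts of the closed trails, each edge being given one of its two directions: that for
which the name of the trail is smaller. -/
def posD (ψ : Fin n → Fin n → Fin n) : Finset (Fin n × Fin n) :=
  Finset.univ.filter fun y => ψ y.2 y.1 ≠ y.1 ∧ mo ψ y < mo ψ y.swap

/-- `ψ` is an involution at every vertex, and the pairs `y, z` with `ψ y z ≠ z` are the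
edges of `H`. -/
structure Trans (H : Finset (Sym2 (Fin n))) (ψ : Fin n → Fin n → Fin n) : Prop where
  loop : ∀ e ∈ H, ¬ e.IsDiag
  inv : ∀ y z, ψ y (ψ y z) = z
  act : ∀ y z, s(y, z) ∈ H ↔ ψ y z ≠ z

lemma mo_eq_code (ψ : Fin n → Fin n → Fin n) (y : Fin n × Fin n) :
    ∃ m, code ((step ψ)^[m] y) = mo ψ y :=
  Nat.sInf_mem (Set.range_nonempty _)

lemma mo_lt (ψ : Fin n → Fin n → Fin n) (y : Fin n × Fin n) : mo ψ y < n * n := by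
  obtain ⟨m, hm⟩ := mo_eq_code ψ y
  rw [← hm]; exact code_lt _

namespace Trans

variable {H : Finset (Sym2 (Fin n))} {ψ : Fin n → Fin n → Fin n}

lemma step_swap_step (h : Trans H ψ) (y : Fin n × Fin n) :
    step ψ (step ψ y).swap = y.swap := by
  simp [step, h.inv, Prod.swap]

lemma step_injective (h : Trans H ψ) : Function.Injective (step ψ) := by
  rintro ⟨a, b⟩ ⟨c, e⟩ hh
  simp only [step, Prod.mk.injEq] at hh
  obtain ⟨rfl, hh⟩ := hh
  have := congrArg (ψ b) hh
  rw [h.inv, h.inv] at this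
  rw [this]

lemma minPer_pos (h : Trans H ψ) (y : Fin n × Fin n) :
    0 < Function.minimalPeriod (step ψ) y :=
  Function.minimalPeriod_pos_of_mem_periodicPts (h.step_injective.mem_periodicPts y)

lemma step_mem (h : Trans H ψ) {y : Fin n × Fin n} (hy : s(y.1, y.2) ∈ H) :
    s((step ψ y).1, (step ψ y).2) ∈ H := by
  rw [Sym2.eq_swap, h.act] at hy
  simp only [step]
  rw [h.act, h.inv]
  exact hy.symm

lemma iter_ne_swap (h : Trans H ψ) (m : ℕ) (y : Fin n × Fin n) (hy : s(y.1, y.2) ∈ H) :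
    (step ψ)^[m] y ≠ y.swap := by
  induction m using Nat.strong_induction_on generalizing y with
  | _ m ih =>
    match m with
    | 0 =>
      intro he
      have := h.loop _ hy
      simp only [Function.iterate_zero, id] at he
      have h1 := congrArg Prod.fst he
      simp at h1
      simp [h1] at this
    | 1 =>
      intro he
      rw [Sym2.eq_swap, h.act] at hy
      have h1 := congrArg Prod.snd he
      simp [step] at h1
      exact hy h1
    | m + 2 =>
      intro he
      rw [Function.iterate_succ_apply', ← h.step_swap_step y] at he
      have he := h.step_injective he
      rw [Function.iterate_succ_apply] at he
      exact ih m (by omega) _ (h.step_mem hy) he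

lemma mo_step (h : Trans H ψ) (y : Fin n × Fin n) : mo ψ (step ψ y) = mo ψ y := by
  unfold mo
  congr 1
  ext c
  constructor
  · rintro ⟨m, rfl⟩
    exact ⟨m + 1, by simp⟩
  · rintro ⟨m, rfl⟩
    refine ⟨m + (Function.minimalPeriod (step ψ) y - 1), ?_⟩
    have hp := h.minPer_pos y
    simp only
    rw [← Function.iterate_succ_apply, show (m + (Function.minimalPeriod (step ψ) y - 1)).succ =
      m + Function.minimalPeriod (step ψ) y by omega, Function.iterate_add_apply,
      Function.iterate_minimalPeriod]

lemma mo_iter (h : Trans H ψ) (y : Fin n × Fin n) (m : ℕ) :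
    mo ψ ((step ψ)^[m] y) = mo ψ y := by
  induction m with
  | zero => rfl
  | succ m ih => rw [Function.iterate_succ_apply', h.mo_step, ih]

/-- Darts with the same name lie on the same closed trail. -/
lemma exists_iter_of_mo_eq (h : Trans H ψ) {y z : Fin n × Fin n} (hyz : mo ψ y = mo ψ z) :
    ∃ m < Function.minimalPeriod (step ψ) y, (step ψ)^[m] y = z := by
  obtain ⟨m, hm⟩ := mo_eq_code ψ y
  obtain ⟨k, hk⟩ := mo_eq_code ψ z
  have he : (step ψ)^[m] y = (step ψ)^[k] z := code_injective (by rw [hm, hk, hyz])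
  have hp := h.minPer_pos z
  have hz : (step ψ)^[Function.minimalPeriod (step ψ) z * k - k + m] y = z := by
    rw [Function.iterate_add_apply, he, ← Function.iterate_add_apply,
      Nat.sub_add_cancel (Nat.le_mul_of_pos_left _ hp)]
    exact (Function.isPeriodicPt_minimalPeriod (step ψ) z).mul_const k
  refine ⟨(Function.minimalPeriod (step ψ) z * k - k + m) % Function.minimalPeriod (step ψ) y,
    Nat.mod_lt _ (h.minPer_pos y), ?_⟩
  rw [Function.iterate_mod_minimalPeriod_eq, hz]

lemma mo_ne_swap (h : Trans H ψ) {y : Fin n × Fin n} (hy : s(y.1, y.2) ∈ H) :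
    mo ψ y ≠ mo ψ y.swap := fun he => by
  obtain ⟨m, -, hm⟩ := h.exists_iter_of_mo_eq he
  exact h.iter_ne_swap m y hy hm

lemma mem_posD (h : Trans H ψ) {y : Fin n × Fin n} :
    y ∈ posD ψ ↔ s(y.1, y.2) ∈ H ∧ mo ψ y < mo ψ y.swap := by
  rw [posD, Finset.mem_filter, Sym2.eq_swap, h.act]
  simp

lemma mem_of_posD (h : Trans H ψ) {y : Fin n × Fin n} (hy : y ∈ posD ψ) : s(y.1, y.2) ∈ H :=
  (h.mem_posD.mp hy).1

lemma ne_of_posD (h : Trans H ψ) {y : Fin n × Fin n} (hy : y ∈ posD ψ) : y.1 ≠ y.2 := by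
  have := h.loop _ (h.mem_of_posD hy); simpa using this

lemma step_mem_posD (h : Trans H ψ) {y : Fin n × Fin n} : step ψ y ∈ posD ψ ↔ y ∈ posD ψ := by
  have hmo : mo ψ (step ψ y).swap = mo ψ y.swap := by rw [← h.mo_step, h.step_swap_step]
  have hH : s((step ψ y).1, (step ψ y).2) ∈ H ↔ s(y.1, y.2) ∈ H := by
    rw [Sym2.eq_swap (a := y.1), h.act, h.act]
    simp only [step, h.inv]
    exact ne_comm
  rw [h.mem_posD, h.mem_posD, hmo, h.mo_step, hH]

lemma iter_mem_posD (h : Trans H ψ) {y : Fin n × Fin n} (m : ℕ) :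
    (step ψ)^[m] y ∈ posD ψ ↔ y ∈ posD ψ := by
  induction m with
  | zero => rfl
  | succ m ih => rw [Function.iterate_succ_apply', h.step_mem_posD, ih]

lemma swap_notMem_posD {y : Fin n × Fin n} (hy : y ∈ posD ψ) : y.swap ∉ posD ψ := by
  intro h'
  simp only [posD, Finset.mem_filter, Prod.swap_swap] at hy h'
  omega

lemma mem_or_swap_mem (h : Trans H ψ) {y : Fin n × Fin n} (hy : s(y.1, y.2) ∈ H) :
    y ∈ posD ψ ∨ y.swap ∈ posD ψ := by
  rw [h.mem_posD, h.mem_posD, Prod.swap_swap, Prod.fst_swap, Prod.snd_swap,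
    Sym2.eq_swap (a := y.2)]
  rcases lt_or_gt_of_ne (h.mo_ne_swap hy) with h1 | h1
  · exact Or.inl ⟨hy, h1⟩
  · exact Or.inr ⟨hy, h1⟩

end Trans

/-- The undirected edges underlying a set of darts. -/
def edg (S : Finset (Fin n × Fin n)) : Finset (Sym2 (Fin n)) := S.image fun y => s(y.1, y.2)

lemma Trans.mem_edg {ψ : Fin n → Fin n → Fin n}
    {S : Finset (Fin n × Fin n)} (hS : S ⊆ posD ψ) {y : Fin n × Fin n} (hy : y ∈ posD ψ) :
    s(y.1, y.2) ∈ edg S ↔ y ∈ S := by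
  constructor
  · intro he
    obtain ⟨z, hz, he⟩ := Finset.mem_image.mp he
    rcases Sym2.eq_iff.mp he with ⟨h1, h2⟩ | ⟨h1, h2⟩
    · rwa [← Prod.ext h1 h2]
    · have : z = y.swap := Prod.ext h1 h2
      exact absurd (hS hz) (this ▸ Trans.swap_notMem_posD hy)
  · intro h; exact Finset.mem_image.mpr ⟨y, h, rfl⟩

lemma Trans.edg_subset {H : Finset (Sym2 (Fin n))} {ψ : Fin n → Fin n → Fin n} (h : Trans H ψ)
    {S : Finset (Fin n × Fin n)} (hS : S ⊆ posD ψ) : edg S ⊆ H := by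
  intro e he
  obtain ⟨z, hz, rfl⟩ := Finset.mem_image.mp he
  exact h.mem_of_posD (hS hz)

lemma Trans.edg_posD {H : Finset (Sym2 (Fin n))} {ψ : Fin n → Fin n → Fin n} (h : Trans H ψ) :
    edg (posD ψ) = H := by
  refine (h.edg_subset subset_rfl).antisymm fun e he => ?_
  induction e using Sym2.ind with | _ a b
  rcases h.mem_or_swap_mem (y := (a, b)) he with h1 | h1
  · exact Finset.mem_image.mpr ⟨_, h1, rfl⟩
  · exact Finset.mem_image.mpr ⟨_, h1, Sym2.eq_swap⟩

/-! ### Partially switched trails give near-states -/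

/-- Along the trails determined by `ψ`, edges inside and outside `G` alternate. -/
structure Alt (G H : Finset (Sym2 (Fin n))) (ψ : Fin n → Fin n → Fin n) : Prop
    extends Trans H ψ where
  flip : ∀ y z, s(y, z) ∈ H → (s(y, z) ∈ G ↔ s(y, ψ y z) ∉ G)

lemma Alt.of_pairs {d : Fin n → ℕ} {G G' : Finset (Sym2 (Fin n))} (hG : Realizes d G)
    (hG' : Realizes d G') {ψ : Fin n → Fin n → Fin n}
    (hψ : ψ ∈ pairs (nb (G \ G')) (nb (G' \ G))) : Alt G (symmDiff G G') ψ := by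
  rw [mem_pairs] at hψ
  have hact : ∀ y z, s(y, z) ∈ symmDiff G G' ↔ ψ y z ≠ z := by
    intro y z
    obtain ⟨h1, h2, h3, h4⟩ := hψ y
    have h1 := h1 z
    have h2 := h2 z
    have h4 := h4 z
    simp only [mem_nb, Finset.mem_sdiff] at h1 h2 h4
    rw [Finset.mem_symmDiff]
    constructor
    · rintro (h | h) he
      · have := h1 h; rw [he] at this; exact h.2 this.1
      · have := h2 h; rw [he] at this; exact h.2 this.1
    · intro h
      by_contra hc
      exact h (h4 (by tauto) (by tauto))
  refine ⟨⟨?_, fun y z => (hψ y).2.2.1 z, hact⟩, ?_⟩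
  · intro e he
    rcases Finset.mem_symmDiff.mp he with h | h
    · exact hG.1 e h.1
    · exact hG'.1 e h.1
  · intro y z hyz
    obtain ⟨h1, h2, h3, h4⟩ := hψ y
    have h1 := h1 z
    have h2 := h2 z
    simp only [mem_nb, Finset.mem_sdiff] at h1 h2
    rw [Finset.mem_symmDiff] at hyz
    tauto

lemma Alt.flip_step {G H : Finset (Sym2 (Fin n))} {ψ : Fin n → Fin n → Fin n} (h : Alt G H ψ)
    {y : Fin n × Fin n} (hy : y ∈ posD ψ) :
    s((step ψ y).1, (step ψ y).2) ∈ G ↔ s(y.1, y.2) ∉ G := by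
  have hH := h.mem_of_posD hy
  rw [Sym2.eq_swap] at hH
  have := h.flip _ _ hH
  rw [Sym2.eq_swap (a := y.1)]
  simp only [step]
  tauto

/-- An involution exchanging a subset of the neighbourhood with its complement splits it evenly. -/
lemma Trans.half {H : Finset (Sym2 (Fin n))} {ψ : Fin n → Fin n → Fin n} (h : Trans H ψ)
    {y : Fin n} {T : Finset (Fin n)} (hT : T ⊆ nb H y)
    (hsw : ∀ z, s(y, z) ∈ H → (z ∈ T ↔ ψ y z ∉ T)) : T.card = (nb H y \ T).card := by
  have hm : ∀ z, s(y, z) ∈ H → s(y, ψ y z) ∈ H := by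
    intro z hz
    rw [h.act] at hz ⊢
    rw [h.inv]; exact hz.symm
  refine Finset.card_bij' (fun z _ => ψ y z) (fun z _ => ψ y z) ?_ ?_ ?_ ?_
  · intro z hz
    have hz' : s(y, z) ∈ H := by simpa using hT hz
    rw [Finset.mem_sdiff, mem_nb]
    exact ⟨hm z hz', (hsw z hz').mp hz⟩
  · intro z hz
    rw [Finset.mem_sdiff, mem_nb] at hz
    by_contra hc
    exact hz.2 ((hsw z hz.1).mpr hc)
  · intro z _; exact h.inv _ _
  · intro z _; exact h.inv _ _

/-- `S` is a set of darts containing whole trails and, from one further trail, the segment from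
the dart `h` to the dart `x`; both ends of the segment belong to `G`. -/
structure Cut (G : Finset (Sym2 (Fin n))) (ψ : Fin n → Fin n → Fin n)
    (S : Finset (Fin n × Fin n)) (h x : Fin n × Fin n) : Prop where
  sub : S ⊆ posD ψ
  hS : h ∈ S
  xS : x ∈ S
  hG : s(h.1, h.2) ∈ G
  xG : s(x.1, x.2) ∈ G
  after : step ψ x ∉ S
  before : ∀ e, step ψ e = h → e ∉ S
  inner : ∀ e ∈ posD ψ, e ≠ x → step ψ e ≠ h → (e ∈ S ↔ step ψ e ∈ S)

/-- Neighbours of `y` in `Z ∩ H`, together with `p` at `u` and `q` at `v`. -/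
def Tst (Z H : Finset (Sym2 (Fin n))) (u v p q y : Fin n) : Finset (Fin n) :=
  (nb (Z ∩ H) y) ∪ ((if y = u then {p} else ∅) ∪ (if y = v then {q} else ∅))

lemma mem_Tst {Z H : Finset (Sym2 (Fin n))} {u v p q y z : Fin n} :
    z ∈ Tst Z H u v p q y ↔ (s(y, z) ∈ Z ∧ s(y, z) ∈ H) ∨ (y = u ∧ z = p) ∨ (y = v ∧ z = q) := by
  unfold Tst
  split_ifs <;> simp_all <;> tauto

namespace Cut

variable {G H : Finset (Sym2 (Fin n))} {ψ : Fin n → Fin n → Fin n}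
  {S : Finset (Fin n × Fin n)} {h x : Fin n × Fin n}

lemma mem_Z (c : Cut G ψ S h x) {e : Fin n × Fin n} (he : e ∈ posD ψ) :
    s(e.1, e.2) ∈ symmDiff G (edg S) ↔ ¬ (s(e.1, e.2) ∈ G ↔ e ∈ S) := by
  rw [Finset.mem_symmDiff, Trans.mem_edg c.sub he]
  tauto

lemma step_x_posD (c : Cut G ψ S h x) (a : Alt G H ψ) : step ψ x ∈ posD ψ :=
  a.step_mem_posD.mpr (c.sub c.xS)

lemma step_x_notMem (c : Cut G ψ S h x) (a : Alt G H ψ) :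
    s((step ψ x).1, (step ψ x).2) ∉ symmDiff G (edg S) := by
  rw [c.mem_Z (c.step_x_posD a), a.flip_step (c.sub c.xS)]
  have := c.xG
  have := c.after
  tauto

lemma h_notMem (c : Cut G ψ S h x) : s(h.1, h.2) ∉ symmDiff G (edg S) := by
  rw [c.mem_Z (c.sub c.hS)]
  have := c.hG
  have := c.hS
  tauto

lemma edges_ne (c : Cut G ψ S h x) (a : Alt G H ψ) :
    s(h.1, h.2) ≠ s((step ψ x).1, (step ψ x).2) := by
  intro he
  have := (Trans.mem_edg c.sub (c.sub c.hS)).mpr c.hS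
  rw [he, Trans.mem_edg c.sub (c.step_x_posD a)] at this
  exact c.after this

/-- The trail pairing exchanges `Tst` with its complement at every vertex. -/
lemma swap_Tst (c : Cut G ψ S h x) (a : Alt G H ψ) (y z : Fin n) (hyz : s(y, z) ∈ H) :
    z ∈ Tst (symmDiff G (edg S)) H h.1 x.2 h.2 (step ψ x).2 y ↔
      ψ y z ∉ Tst (symmDiff G (edg S)) H h.1 x.2 h.2 (step ψ x).2 y := by
  have key : ∀ y z, (z, y) ∈ posD ψ →
      (z ∈ Tst (symmDiff G (edg S)) H h.1 x.2 h.2 (step ψ x).2 y ↔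
        ψ y z ∉ Tst (symmDiff G (edg S)) H h.1 x.2 h.2 (step ψ x).2 y) := by
    intro y z he
    have hs : step ψ (z, y) ∈ posD ψ := a.step_mem_posD.mpr he
    have m1 := a.mem_of_posD he
    have m2 := a.mem_of_posD hs
    have z1 := c.mem_Z he
    have z2 := c.mem_Z hs
    have fl := a.flip_step he
    have i1 : ¬ (y = h.1 ∧ z = h.2) := by
      rintro ⟨h1, h2⟩
      refine Trans.swap_notMem_posD he ?_
      have : (z, y).swap = h := Prod.ext h1 h2
      rw [this]; exact c.sub c.hS
    have i2 : ¬ (y = x.2 ∧ z = (step ψ x).2) := by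
      rintro ⟨h1, h2⟩
      refine Trans.swap_notMem_posD he ?_
      have : (z, y).swap = step ψ x := Prod.ext h1 h2
      rw [this]; exact c.step_x_posD a
    have i3 : (y = h.1 ∧ ψ y z = h.2) ↔ step ψ (z, y) = h := by
      rw [Prod.ext_iff]; rfl
    have i4 : (y = x.2 ∧ ψ y z = (step ψ x).2) ↔ (z, y) = x := by
      rw [← a.step_injective.eq_iff (a := (z, y)), Prod.ext_iff]; rfl
    rw [mem_Tst, mem_Tst, i3, i4, Sym2.eq_swap (a := y) (b := z)]
    have e2 : s(y, ψ y z) = s((step ψ (z, y)).1, (step ψ (z, y)).2) := rfl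
    rw [e2, z1, z2, fl]
    simp only [m2, i1, i2, and_true, or_false]
    simp only at m1
    simp only [m1, and_true]
    by_cases cx : (z, y) = x
    · have k1 := c.xS
      have hxG := c.xG
      rw [← cx] at k1 hxG
      simp only at hxG
      simp [cx, hxG, cx ▸ k1]
    · by_cases ch : step ψ (z, y) = h
      · have k1 := c.before _ ch
        have hhG := c.hG
        rw [← ch, fl] at hhG
        simp only at hhG
        simp [ch, hhG, k1]
      · have k1 := c.inner _ he cx ch
        simp only [cx, ch, or_false, k1]
        generalize (s((z, y).1, (z, y).2) ∈ G) = g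
        generalize (step ψ (z, y) ∈ S) = t
        clear * -
        by_cases g <;> by_cases t <;> simp [*]
  rcases a.mem_or_swap_mem (y := (y, z)) hyz with h1 | h1
  · have h2 : step ψ (ψ y z, y) = (y, z) := by simp [step, a.inv]
    have := key y (ψ y z) (a.step_mem_posD.mp (h2 ▸ h1))
    rw [a.inv] at this
    tauto
  · exact key y z h1

lemma Tst_sub (c : Cut G ψ S h x) (a : Alt G H ψ) (y : Fin n) :
    Tst (symmDiff G (edg S)) H h.1 x.2 h.2 (step ψ x).2 y ⊆ nb H y := by
  intro z hz
  rw [mem_nb]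
  rcases mem_Tst.mp hz with h1 | ⟨rfl, rfl⟩ | ⟨rfl, rfl⟩
  · exact h1.2
  · exact a.mem_of_posD (c.sub c.hS)
  · exact a.mem_of_posD (c.step_x_posD a)

lemma card_Tst (c : Cut G ψ S h x) (a : Alt G H ψ) (y : Fin n) :
    (Tst (symmDiff G (edg S)) H h.1 x.2 h.2 (step ψ x).2 y).card =
      (nb (symmDiff G (edg S) ∩ H) y).card + (if y = h.1 then 1 else 0) +
        (if y = x.2 then 1 else 0) := by
  have n1 := c.h_notMem
  have n2 := c.step_x_notMem a
  have n3 := c.edges_ne a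
  have hf : (step ψ x).1 = x.2 := rfl
  rw [hf] at n2 n3
  unfold Tst
  rw [Finset.card_union_of_disjoint, Finset.card_union_of_disjoint, ← add_assoc]
  · split_ifs <;> simp
  · rw [Finset.disjoint_left]
    intro z h1 h2
    split_ifs at h1 h2 with c1 c2
    · simp at h1 h2
      rw [h1] at h2
      exact n3 (by rw [← c1, ← c2, h2])
    all_goals simp at h1 h2
  · rw [Finset.disjoint_left]
    intro z h1 h2
    simp only [mem_nb, Finset.mem_inter] at h1
    rw [Finset.mem_union] at h2
    rcases h2 with h2 | h2
    · split_ifs at h2 with c1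
      · simp at h2; subst c1 h2; exact n1 h1.1
      · simp at h2
    · split_ifs at h2 with c1
      · simp at h2; subst c1 h2; exact n2 h1.1
      · simp at h2

/-- Half of the trail edges at a vertex belong to `G`, and half to `Tst`. -/
lemma card_Tst_eq (c : Cut G ψ S h x) (a : Alt G H ψ) (y : Fin n) :
    (Tst (symmDiff G (edg S)) H h.1 x.2 h.2 (step ψ x).2 y).card = (nb (G ∩ H) y).card ∧
    2 * (nb (G ∩ H) y).card = (nb H y).card := by
  have h1 := a.half (c.Tst_sub a y) (c.swap_Tst a y)
  have hs : nb (G ∩ H) y ⊆ nb H y := by intro z; simp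
  have h2 := a.half hs (by
    intro z hz
    have := a.flip y z hz
    have hz' : s(y, ψ y z) ∈ H := by
      rw [a.act, a.inv]; rw [a.act] at hz; exact hz.symm
    simp only [mem_nb, Finset.mem_inter]
    tauto)
  have h3 := Finset.card_sdiff_add_card_eq_card (c.Tst_sub a y)
  have h4 := Finset.card_sdiff_add_card_eq_card hs
  omega

lemma card_nb_split (E H : Finset (Sym2 (Fin n))) (y : Fin n) :
    (nb E y).card = (nb (E \ H) y).card + (nb (E ∩ H) y).card := by
  rw [← card_nb_disjoint_union, Finset.sdiff_union_inter]
  rw [Finset.disjoint_left]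
  intro e; simp; tauto

lemma near (c : Cut G ψ S h x) (a : Alt G H ψ) {d : Fin n → ℕ} (hG : Realizes d G) :
    Near d (symmDiff G (edg S)) h.1 x.2 := by
  refine ⟨?_, fun y => ?_⟩
  · intro e he
    rcases Finset.mem_symmDiff.mp he with h | h
    · exact hG.1 e h.1
    · exact a.loop e (a.edg_subset c.sub h.1)
  · have e1 := card_nb_split (symmDiff G (edg S)) H y
    have e2 := card_nb_split G H y
    have e3 : symmDiff G (edg S) \ H = G \ H := by
      ext e
      have : e ∈ edg S → e ∈ H := fun he => a.edg_subset c.sub he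
      simp only [Finset.mem_sdiff, Finset.mem_symmDiff]
      tauto
    have e4 := c.card_Tst a y
    have e5 := c.card_Tst_eq a y
    rw [e3] at e1
    rw [← hG.2 y]
    omega

lemma near' (c : Cut G ψ S h x) (a : Alt G H ψ) {d : Fin n → ℕ} (hG : Realizes d G) :
    Near d (((symmDiff (symmDiff G (edg S)) H).erase s(h.1, h.2)).erase s(x.2, (step ψ x).2))
      h.2 (step ψ x).2 := by
  have n1 := c.h_notMem
  have n2 := c.step_x_notMem a
  have n3 := c.edges_ne a
  have m1 := a.mem_of_posD (c.sub c.hS)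
  have m2 := a.mem_of_posD (c.step_x_posD a)
  have l1 := a.ne_of_posD (c.sub c.hS)
  have l2 := a.ne_of_posD (c.step_x_posD a)
  have hf : (step ψ x).1 = x.2 := rfl
  rw [hf] at n2 n3 m2 l2
  have hN := c.near a hG
  refine ⟨?_, fun y => ?_⟩
  · intro e he
    rcases Finset.mem_symmDiff.mp (Finset.mem_of_mem_erase (Finset.mem_of_mem_erase he)) with h | h
    · exact hN.1 e h.1
    · exact a.loop e h.1
  · have p1 : s(h.1, h.2) ∈ symmDiff (symmDiff G (edg S)) H := by
      rw [Finset.mem_symmDiff]; exact Or.inr ⟨m1, n1⟩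
    have p2 : s(x.2, (step ψ x).2) ∈ symmDiff (symmDiff G (edg S)) H := by
      rw [Finset.mem_symmDiff]; exact Or.inr ⟨m2, n2⟩
    have e1 := card_nb_erase l2 (Finset.mem_erase.mpr ⟨n3.symm, p2⟩) y
    have e2 := card_nb_erase l1 p1 y
    have e3 := card_nb_split (symmDiff (symmDiff G (edg S)) H) H y
    have e4 := card_nb_split (symmDiff G (edg S)) H y
    have e5 : symmDiff (symmDiff G (edg S)) H \ H = symmDiff G (edg S) \ H := by
      ext e
      simp only [Finset.mem_sdiff, Finset.mem_symmDiff]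
      tauto
    have e6 := card_nb_split H (symmDiff G (edg S)) y
    have e7 : symmDiff (symmDiff G (edg S)) H ∩ H = H \ symmDiff G (edg S) := by
      ext e
      simp only [Finset.mem_sdiff, Finset.mem_symmDiff, Finset.mem_inter]
      tauto
    have e8 := c.card_Tst a y
    have e9 := c.card_Tst_eq a y
    have e10 := hN.2 y
    rw [Finset.inter_comm] at e6
    rw [e5, e7] at e3
    omega

end Cut

/-! ### Switching along the trails -/

/-- The darts of all trails named before that of `h`, and the first `j` darts from `h` on. -/
def seg (ψ : Fin n → Fin n → Fin n) (h : Fin n × Fin n) (j : ℕ) : Finset (Fin n × Fin n) :=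
  (posD ψ).filter (fun y => mo ψ y < mo ψ h) ∪ (Finset.range j).image fun t => (step ψ)^[t] h

/-- The number of steps from `h` to `x`. -/
def idx (ψ : Fin n → Fin n → Fin n) (h x : Fin n × Fin n) : ℕ :=
  sInf {t | (step ψ)^[t] h = x}

/-- The edge set obtained from `G` by switching all trails before that of `h`, and the trail of
`h` from `h` up to `x`. -/
def part (G : Finset (Sym2 (Fin n))) (ψ : Fin n → Fin n → Fin n) (h x : Fin n × Fin n) :
    Finset (Sym2 (Fin n)) :=
  symmDiff G (edg (seg ψ h (idx ψ h x + 1)))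

namespace Alt

variable {G H : Finset (Sym2 (Fin n))} {ψ : Fin n → Fin n → Fin n} {h : Fin n × Fin n}

lemma iter_mem_iff (a : Alt G H ψ) (hh : h ∈ posD ψ) (hG : s(h.1, h.2) ∈ G) (t : ℕ) :
    s(((step ψ)^[t] h).1, ((step ψ)^[t] h).2) ∈ G ↔ Even t := by
  induction t with
  | zero => simpa using hG
  | succ t ih =>
    rw [Function.iterate_succ_apply', a.flip_step ((a.iter_mem_posD t).mpr hh), ih,
      Nat.even_add_one]

lemma even_period (a : Alt G H ψ) (hh : h ∈ posD ψ) (hG : s(h.1, h.2) ∈ G) :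
    Even (Function.minimalPeriod (step ψ) h) := by
  rw [← a.iter_mem_iff hh hG, Function.iterate_minimalPeriod]
  exact hG

lemma iter_inj {s t : ℕ} (hs : s < Function.minimalPeriod (step ψ) h)
    (ht : t < Function.minimalPeriod (step ψ) h) (he : (step ψ)^[s] h = (step ψ)^[t] h) : s = t :=
  Function.iterate_injOn_Iio_minimalPeriod hs ht he

lemma idx_iter {t : ℕ} (ht : t < Function.minimalPeriod (step ψ) h) :
    idx ψ h ((step ψ)^[t] h) = t := by
  have hmem : (step ψ)^[idx ψ h ((step ψ)^[t] h)] h = (step ψ)^[t] h :=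
    Nat.sInf_mem (s := {k | (step ψ)^[k] h = (step ψ)^[t] h}) ⟨t, rfl⟩
  have hle : idx ψ h ((step ψ)^[t] h) ≤ t := Nat.sInf_le rfl
  exact iter_inj (hle.trans_lt ht) ht hmem

lemma seg_sub (a : Alt G H ψ) (hh : h ∈ posD ψ) (j : ℕ) : seg ψ h j ⊆ posD ψ := by
  intro y hy
  rcases Finset.mem_union.mp hy with hy | hy
  · exact (Finset.mem_filter.mp hy).1
  · obtain ⟨t, -, rfl⟩ := Finset.mem_image.mp hy
    exact (a.iter_mem_posD t).mpr hh

lemma mem_seg_iter (a : Alt G H ψ) {j t : ℕ} (hj : j ≤ Function.minimalPeriod (step ψ) h)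
    (ht : t < Function.minimalPeriod (step ψ) h) : (step ψ)^[t] h ∈ seg ψ h j ↔ t < j := by
  constructor
  · intro hm
    rcases Finset.mem_union.mp hm with hm | hm
    · rw [Finset.mem_filter, a.mo_iter] at hm
      exact absurd hm.2 (lt_irrefl _)
    · obtain ⟨k, hk, he⟩ := Finset.mem_image.mp hm
      rw [Finset.mem_range] at hk
      rw [← iter_inj (by omega) ht he]; exact hk
  · intro htj
    exact Finset.mem_union_right _ (Finset.mem_image.mpr ⟨t, by simpa using htj, rfl⟩)

lemma cut (a : Alt G H ψ) (hh : h ∈ posD ψ) (hG : s(h.1, h.2) ∈ G) {i : ℕ}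
    (hi : 2 * i < Function.minimalPeriod (step ψ) h) :
    Cut G ψ (seg ψ h (2 * i + 1)) h ((step ψ)^[2 * i] h) := by
  have hi' : 2 * i + 1 < Function.minimalPeriod (step ψ) h := by
    obtain ⟨k, hk⟩ := a.even_period hh hG
    omega
  refine ⟨a.seg_sub hh _, ?_, ?_, hG, ?_, ?_, ?_, ?_⟩
  · exact (a.mem_seg_iter hi'.le (t := 0) (by omega)).mpr (by omega)
  · exact (a.mem_seg_iter hi'.le hi).mpr (by omega)
  · rw [a.iter_mem_iff hh hG]; simp
  · rw [← Function.iterate_succ_apply' (step ψ), a.mem_seg_iter hi'.le hi']; simp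
  · intro e he hm
    rcases Finset.mem_union.mp hm with hm | hm
    · rw [Finset.mem_filter, ← a.mo_step e, he] at hm
      exact lt_irrefl _ hm.2
    · obtain ⟨k, hk, rfl⟩ := Finset.mem_image.mp hm
      rw [Finset.mem_range] at hk
      rw [← Function.iterate_succ_apply' (step ψ)] at he
      have := iter_inj (h := h) (ψ := ψ) (s := k + 1) (t := 0) (by omega) (by omega) he
      omega
  · intro e he hx hsh
    constructor
    · intro hm
      rcases Finset.mem_union.mp hm with hm | hm
      · rw [Finset.mem_filter] at hm
        refine Finset.mem_union_left _ (Finset.mem_filter.mpr ⟨a.step_mem_posD.mpr he, ?_⟩)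
        rw [a.mo_step]; exact hm.2
      · obtain ⟨k, hk, rfl⟩ := Finset.mem_image.mp hm
        rw [Finset.mem_range] at hk
        have : k ≠ 2 * i := by rintro rfl; exact hx rfl
        exact Finset.mem_union_right _ (Finset.mem_image.mpr ⟨k + 1, by simp; omega,
          Function.iterate_succ_apply' _ _ _⟩)
    · intro hm
      rcases Finset.mem_union.mp hm with hm | hm
      · rw [Finset.mem_filter, a.mo_step] at hm
        exact Finset.mem_union_left _ (Finset.mem_filter.mpr ⟨he, hm.2⟩)
      · obtain ⟨k, hk, hke⟩ := Finset.mem_image.mp hm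
        rw [Finset.mem_range] at hk
        obtain _ | k := k
        · exact absurd hke.symm hsh
        · rw [Function.iterate_succ_apply'] at hke
          rw [← a.step_injective hke]
          exact Finset.mem_union_right _ (Finset.mem_image.mpr ⟨k, by simp; omega, rfl⟩)

lemma edg_seg_succ (j : ℕ) : edg (seg ψ h (j + 1)) =
    insert s(((step ψ)^[j] h).1, ((step ψ)^[j] h).2) (edg (seg ψ h j)) := by
  unfold edg seg
  rw [Finset.range_add_one, Finset.image_insert, Finset.union_insert, Finset.image_insert]

/-- A step with even index removes an edge. -/
lemma Z_even (a : Alt G H ψ) (hh : h ∈ posD ψ) (hG : s(h.1, h.2) ∈ G) {j : ℕ} (hj : Even j)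
    (hP : j < Function.minimalPeriod (step ψ) h) :
    s(((step ψ)^[j] h).1, ((step ψ)^[j] h).2) ∈ symmDiff G (edg (seg ψ h j)) ∧
    symmDiff G (edg (seg ψ h (j + 1))) =
      (symmDiff G (edg (seg ψ h j))).erase s(((step ψ)^[j] h).1, ((step ψ)^[j] h).2) := by
  have h1 := (a.iter_mem_iff hh hG j).mpr hj
  have h2 : s(((step ψ)^[j] h).1, ((step ψ)^[j] h).2) ∉ edg (seg ψ h j) := by
    rw [Trans.mem_edg (a.seg_sub hh j) ((a.iter_mem_posD j).mpr hh), a.mem_seg_iter hP.le hP]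
    simp
  rw [edg_seg_succ]
  generalize s(((step ψ)^[j] h).1, ((step ψ)^[j] h).2) = f at *
  refine ⟨Finset.mem_symmDiff.mpr (Or.inl ⟨h1, h2⟩), ?_⟩
  ext e
  simp only [Finset.mem_symmDiff, Finset.mem_insert, Finset.mem_erase]
  by_cases he : e = f
  · subst he; simp [h1]
  · simp [he]

/-- A step with odd index adds an edge. -/
lemma Z_odd (a : Alt G H ψ) (hh : h ∈ posD ψ) (hG : s(h.1, h.2) ∈ G) {j : ℕ} (hj : ¬ Even j)
    (hP : j < Function.minimalPeriod (step ψ) h) :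
    s(((step ψ)^[j] h).1, ((step ψ)^[j] h).2) ∉ symmDiff G (edg (seg ψ h j)) ∧
    symmDiff G (edg (seg ψ h (j + 1))) =
      insert s(((step ψ)^[j] h).1, ((step ψ)^[j] h).2) (symmDiff G (edg (seg ψ h j))) := by
  have h1 := (a.iter_mem_iff hh hG j).not.mpr hj
  have h2 : s(((step ψ)^[j] h).1, ((step ψ)^[j] h).2) ∉ edg (seg ψ h j) := by
    rw [Trans.mem_edg (a.seg_sub hh j) ((a.iter_mem_posD j).mpr hh), a.mem_seg_iter hP.le hP]
    simp
  rw [edg_seg_succ]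
  generalize s(((step ψ)^[j] h).1, ((step ψ)^[j] h).2) = f at *
  refine ⟨?_, ?_⟩
  · rw [Finset.mem_symmDiff]; tauto
  ext e
  simp only [Finset.mem_symmDiff, Finset.mem_insert]
  by_cases he : e = f
  · subst he; simp [h1]
  · simp [he]

/-- From `G` with all earlier trails switched to the chosen completion of the near-state reached
after `2 i + 1` steps along the trail of `h`. -/
lemma path_aux (a : Alt G H ψ) (hh : h ∈ posD ψ) (hG : s(h.1, h.2) ∈ G)
    {d : Fin n → ℕ} {D : ℕ} (hd : ∀ y, d y ≤ D) (hD3 : 3 ≤ D)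
    (hDM : 9 * D ^ 2 ≤ M d) (F : Finset (Sym2 (Fin n)) → ℝ) (hR : Realizes d G) (i : ℕ)
    (hi : 2 * i < Function.minimalPeriod (step ψ) h) :
    |F (symmDiff G (edg (seg ψ h 0))) -
      F (Phi (symmDiff G (edg (seg ψ h (2 * i + 1))), h.1, ((step ψ)^[2 * i] h).2))| ≤
    ∑ k ∈ Finset.range i,
      5 * √(enN d F (symmDiff G (edg (seg ψ h (2 * k + 1))), h.1, ((step ψ)^[2 * k] h).2)) +
      2 * √(enN d F (symmDiff G (edg (seg ψ h (2 * i + 1))), h.1, ((step ψ)^[2 * i] h).2)) := by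
  induction i with
  | zero =>
    have hN := (a.cut hh hG hi).near a hR
    obtain ⟨h1, h2⟩ := a.Z_even hh hG (j := 0) (by simp) (by omega)
    have hl := link_close hd hD3 hDM F hN (a.ne_of_posD hh) (by
      rw [show 2 * 0 + 1 = 0 + 1 from rfl, h2]; exact Finset.notMem_erase _ _)
    simp only [Function.iterate_zero, id, mul_zero, Finset.range_zero, Finset.sum_empty,
      zero_add] at h1 h2 hl ⊢
    rw [h2] at hl ⊢
    rw [Finset.insert_erase h1] at hl
    rw [abs_sub_comm]
    exact hl.trans (by linarith [Real.sqrt_nonneg (enN d F ((symmDiff G (edg (seg ψ h 0))).erase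
      s(h.1, h.2), h.1, h.2))])
  | succ i ih =>
    have ih := ih (by omega)
    have hi2 : 2 * i < Function.minimalPeriod (step ψ) h := by omega
    have hN := (a.cut hh hG hi2).near a hR
    have hN' := (a.cut hh hG hi).near a hR
    obtain ⟨h1, h2⟩ := a.Z_odd hh hG (j := 2 * i + 1) (by simp) (by omega)
    obtain ⟨h3, h4⟩ := a.Z_even hh hG (j := 2 * i + 2) (by simp [Nat.even_add_one]) hi
    have p1 : (step ψ)^[2 * i + 1] h ∈ posD ψ := (a.iter_mem_posD _).mpr hh
    have hsw := a.iter_ne_swap 1 _ (a.mem_of_posD p1)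
    have l1 := a.ne_of_posD p1
    rw [show 2 * (i + 1) = 2 * i + 2 by ring] at hN' ⊢
    have e1 : ((step ψ)^[2 * i + 1] h).1 = ((step ψ)^[2 * i] h).2 := by
      rw [Function.iterate_succ_apply']; rfl
    have e2 : ((step ψ)^[2 * i + 2] h).1 = ((step ψ)^[2 * i + 1] h).2 := by
      rw [Function.iterate_succ_apply' _ (2 * i + 1)]; rfl
    rw [Function.iterate_one, ← Function.iterate_succ_apply' (step ψ)] at hsw
    rw [e1] at h1 h2 l1
    rw [e2] at h3 h4
    have hne : ((step ψ)^[2 * i] h).2 ≠ ((step ψ)^[2 * i + 2] h).2 := by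
      intro he
      exact hsw (Prod.ext e2 (he.symm.trans e1.symm))
    rw [show 2 * i + 1 + 1 = 2 * i + 2 by ring] at h2
    rw [h2] at h3 h4
    have hed : s(((step ψ)^[2 * i] h).2, ((step ψ)^[2 * i + 1] h).2) ≠
        s(((step ψ)^[2 * i + 1] h).2, ((step ψ)^[2 * i + 2] h).2) := by
      rw [Sym2.eq_swap, Ne, Sym2.congr_right]; exact hne
    rw [Finset.erase_insert_of_ne hed] at h4
    rw [h4] at hN' ⊢
    have hl := link_slide hd hD3 hDM F hN hN' h1
      ((Finset.mem_insert.mp h3).resolve_left hed.symm) l1 hne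
    rw [Finset.sum_range_succ]
    refine (abs_sub_le _ _ _).trans ((add_le_add ih hl).trans (le_of_eq ?_))
    ring

/-- Switching a whole trail. -/
lemma path_trail (a : Alt G H ψ) (hh : h ∈ posD ψ) (hG : s(h.1, h.2) ∈ G)
    {d : Fin n → ℕ} {D : ℕ} (hd : ∀ y, d y ≤ D) (hD3 : 3 ≤ D)
    (hDM : 9 * D ^ 2 ≤ M d) (F : Finset (Sym2 (Fin n)) → ℝ) (hR : Realizes d G) :
    |F (symmDiff G (edg (seg ψ h 0))) -
      F (symmDiff G (edg (seg ψ h (Function.minimalPeriod (step ψ) h))))| ≤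
    ∑ k ∈ Finset.range (Function.minimalPeriod (step ψ) h / 2),
      5 * √(enN d F (part G ψ h ((step ψ)^[2 * k] h), h.1, ((step ψ)^[2 * k] h).2)) := by
  obtain ⟨l, hl⟩ := a.even_period hh hG
  have hp := a.minPer_pos h
  obtain ⟨i, rfl⟩ : ∃ i, l = i + 1 := ⟨l - 1, by omega⟩
  have hi : 2 * i < Function.minimalPeriod (step ψ) h := by omega
  have hpart : ∀ k ∈ Finset.range (i + 1),
      5 * √(enN d F (part G ψ h ((step ψ)^[2 * k] h), h.1, ((step ψ)^[2 * k] h).2)) =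
      5 * √(enN d F (symmDiff G (edg (seg ψ h (2 * k + 1))), h.1, ((step ψ)^[2 * k] h).2)) := by
    intro k hk
    rw [Finset.mem_range] at hk
    rw [part, idx_iter (by omega)]
  rw [show Function.minimalPeriod (step ψ) h / 2 = i + 1 by omega, Finset.sum_congr rfl hpart,
    Finset.sum_range_succ]
  have h1 := a.path_aux hh hG hd hD3 hDM F hR i hi
  obtain ⟨h2, h3⟩ := a.Z_odd hh hG (j := 2 * i + 1) (by simp) (by omega)
  have p1 : (step ψ)^[2 * i + 1] h ∈ posD ψ := (a.iter_mem_posD _).mpr hh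
  have l1 := a.ne_of_posD p1
  have e1 : ((step ψ)^[2 * i + 1] h).1 = ((step ψ)^[2 * i] h).2 := by
    rw [Function.iterate_succ_apply']; rfl
  have e2 : ((step ψ)^[2 * i + 1] h).2 = h.1 := by
    have : (step ψ)^[2 * i + 1 + 1] h = h := by
      rw [show 2 * i + 1 + 1 = Function.minimalPeriod (step ψ) h by omega,
        Function.iterate_minimalPeriod]
    rw [Function.iterate_succ_apply'] at this
    exact congrArg Prod.fst this
  rw [e1, e2, Sym2.eq_swap] at h2 h3
  rw [e1, e2] at l1
  have h4 := link_close hd hD3 hDM F ((a.cut hh hG hi).near a hR) l1.symm h2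
  rw [← h3, show 2 * i + 1 + 1 = Function.minimalPeriod (step ψ) h by omega] at h4
  refine (abs_sub_le _ _ _).trans ((add_le_add h1 h4).trans ?_)
  linarith [Real.sqrt_nonneg (enN d F (symmDiff G (edg (seg ψ h (2 * i + 1))), h.1,
    ((step ψ)^[2 * i] h).2))]

end Alt

/-- The darts of the chosen direction whose edge lies in `G`. -/
def blue (G : Finset (Sym2 (Fin n))) (ψ : Fin n → Fin n → Fin n) : Finset (Fin n × Fin n) :=
  (posD ψ).filter fun y => s(y.1, y.2) ∈ G

/-- A starting dart in `G`, chosen for each trail, of the trail through `x`. -/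
def start (G : Finset (Sym2 (Fin n))) (ψ : Fin n → Fin n → Fin n) (x : Fin n × Fin n) :
    Fin n × Fin n :=
  if h : ∃ h ∈ blue G ψ, mo ψ h = mo ψ x then h.choose else x

lemma start_spec {G : Finset (Sym2 (Fin n))} {ψ : Fin n → Fin n → Fin n} {x : Fin n × Fin n}
    (hx : x ∈ blue G ψ) : start G ψ x ∈ blue G ψ ∧ mo ψ (start G ψ x) = mo ψ x := by
  have h : ∃ h ∈ blue G ψ, mo ψ h = mo ψ x := ⟨x, hx, rfl⟩
  rw [start, dif_pos h]
  exact h.choose_spec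

lemma start_congr {G : Finset (Sym2 (Fin n))} {ψ : Fin n → Fin n → Fin n} {x x' : Fin n × Fin n}
    (hx : x ∈ blue G ψ) (he : mo ψ x = mo ψ x') : start G ψ x = start G ψ x' := by
  have h : ∃ h ∈ blue G ψ, mo ψ h = mo ψ x := ⟨x, hx, rfl⟩
  have h' : ∃ h ∈ blue G ψ, mo ψ h = mo ψ x' := ⟨x, hx, he⟩
  rw [start, start, dif_pos h, dif_pos h']
  simp only [he]

/-- The near-state at which the trail through `x` has been switched up to `x`. -/
def nst (G : Finset (Sym2 (Fin n))) (ψ : Fin n → Fin n → Fin n) (x : Fin n × Fin n) :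
    Finset (Sym2 (Fin n)) × Fin n × Fin n :=
  (part G ψ (start G ψ x) x, (start G ψ x).1, x.2)

lemma Alt.cut_blue {G H : Finset (Sym2 (Fin n))} {ψ : Fin n → Fin n → Fin n} (a : Alt G H ψ)
    {x : Fin n × Fin n} (hx : x ∈ blue G ψ) :
    Cut G ψ (seg ψ (start G ψ x) (idx ψ (start G ψ x) x + 1)) (start G ψ x) x := by
  obtain ⟨h1, h2⟩ := start_spec hx
  generalize start G ψ x = h at *
  obtain ⟨hh, hG⟩ := Finset.mem_filter.mp h1
  obtain ⟨m, hm, rfl⟩ := a.exists_iter_of_mo_eq h2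
  have hev := (a.iter_mem_iff hh hG m).mp (Finset.mem_filter.mp hx).2
  obtain ⟨i, rfl⟩ := hev
  rw [Alt.idx_iter hm, ← two_mul]
  exact a.cut hh hG (by omega)

/-- Switching trail by trail from `G` to `G'`. -/
lemma path_total {d : Fin n → ℕ} {G G' : Finset (Sym2 (Fin n))} {ψ : Fin n → Fin n → Fin n}
    (a : Alt G (symmDiff G G') ψ) {D : ℕ} (hd : ∀ y, d y ≤ D) (hD3 : 3 ≤ D)
    (hDM : 9 * D ^ 2 ≤ M d) (F : Finset (Sym2 (Fin n)) → ℝ) (hR : Realizes d G) :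
    |F G - F G'| ≤ ∑ x ∈ blue G ψ, 5 * √(enN d F (nst G ψ x)) := by
  set K : ℕ → Finset (Fin n × Fin n) := fun c => (posD ψ).filter fun y => mo ψ y < c with hK
  set g : ℕ → ℝ := fun c => F (symmDiff G (edg (K c))) with hg
  have hstep : ∀ c, |g c - g (c + 1)| ≤
      ∑ x ∈ (blue G ψ).filter (fun x => mo ψ x = c), 5 * √(enN d F (nst G ψ x)) := by
    intro c
    by_cases hc : ∃ y ∈ posD ψ, mo ψ y = c
    · have hb : ∃ y ∈ blue G ψ, mo ψ y = c := by
        obtain ⟨y, hy, hyc⟩ := hc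
        by_cases hyG : s(y.1, y.2) ∈ G
        · exact ⟨y, Finset.mem_filter.mpr ⟨hy, hyG⟩, hyc⟩
        · exact ⟨step ψ y, Finset.mem_filter.mpr ⟨a.step_mem_posD.mpr hy,
            (a.flip_step hy).mpr hyG⟩, by rw [a.mo_step, hyc]⟩
      obtain ⟨y, hy, hyc⟩ := hb
      obtain ⟨h1, h2⟩ := start_spec hy
      have hst : ∀ x, mo ψ x = c → start G ψ x = start G ψ y := fun x hx =>
        (start_congr hy (hyc.trans hx.symm)).symm
      rw [hyc] at h2
      obtain ⟨hh, hG⟩ := Finset.mem_filter.mp h1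
      have s0 : seg ψ (start G ψ y) 0 = K c := by simp [seg, hK, h2]
      have s1 : seg ψ (start G ψ y) (Function.minimalPeriod (step ψ) (start G ψ y)) =
          K (c + 1) := by
        ext z
        simp only [seg, hK, Finset.mem_union, Finset.mem_filter, Finset.mem_image,
          Finset.mem_range, h2]
        constructor
        · rintro (h | ⟨t, ht, rfl⟩)
          · exact ⟨h.1, by omega⟩
          · exact ⟨(a.iter_mem_posD t).mpr hh, by rw [a.mo_iter]; omega⟩
        · rintro ⟨hz, hlt⟩
          rcases Nat.lt_succ_iff_lt_or_eq.mp hlt with h | h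
          · exact Or.inl ⟨hz, h⟩
          · exact Or.inr (a.exists_iter_of_mo_eq (h2.trans h.symm))
      have hp := a.path_trail hh hG hd hD3 hDM F hR
      rw [s0, s1] at hp
      refine hp.trans ?_
      have hev := a.even_period hh hG
      obtain ⟨l, hl⟩ := hev
      rw [← Finset.sum_image (s := Finset.range
          (Function.minimalPeriod (step ψ) (start G ψ y) / 2))
        (g := fun k => (step ψ)^[2 * k] (start G ψ y))
        (f := fun x => 5 * √(enN d F (part G ψ (start G ψ y) x, (start G ψ y).1, x.2)))]
      · have : ∀ x ∈ (blue G ψ).filter (fun x => mo ψ x = c), 5 * √(enN d F (nst G ψ x)) =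
            5 * √(enN d F (part G ψ (start G ψ y) x, (start G ψ y).1, x.2)) := by
          intro x hx
          rw [nst, hst x (Finset.mem_filter.mp hx).2]
        rw [Finset.sum_congr rfl this]
        refine Finset.sum_le_sum_of_subset_of_nonneg ?_ fun _ _ _ => by positivity
        intro x hx
        obtain ⟨k, -, rfl⟩ := Finset.mem_image.mp hx
        refine Finset.mem_filter.mpr ⟨Finset.mem_filter.mpr ⟨(a.iter_mem_posD _).mpr hh, ?_⟩, ?_⟩
        · rw [a.iter_mem_iff hh hG]; simp
        · rw [a.mo_iter, h2]
      · intro k hk k' hk' he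
        simp only [Finset.coe_range, Set.mem_Iio] at hk hk'
        have := Alt.iter_inj (h := start G ψ y) (ψ := ψ) (by omega) (by omega) he
        omega
    · have : K (c + 1) = K c := by
        ext z
        simp only [hK, Finset.mem_filter]
        constructor
        · rintro ⟨hz, hlt⟩
          rcases Nat.lt_succ_iff_lt_or_eq.mp hlt with h | h
          · exact ⟨hz, h⟩
          · exact absurd ⟨z, hz, h⟩ hc
        · rintro ⟨hz, hlt⟩; exact ⟨hz, by omega⟩
      simp only [hg, this, sub_self, abs_zero]
      exact Finset.sum_nonneg fun _ _ => by positivity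
  have htel : ∀ c, |g 0 - g c| ≤ ∑ i ∈ Finset.range c, |g i - g (i + 1)| := by
    intro c
    induction c with
    | zero => simp
    | succ c ih =>
      rw [Finset.sum_range_succ]
      exact (abs_sub_le _ _ _).trans (by linarith)
  have g0 : g 0 = F G := by
    simp only [hg, hK]
    refine congrArg F ?_
    ext e; simp [edg, Finset.mem_symmDiff]
  have g1 : g (n * n) = F G' := by
    have : K (n * n) = posD ψ := by
      simp only [hK]
      exact Finset.filter_true_of_mem fun y _ => mo_lt ψ y
    simp only [hg, this]
    rw [a.edg_posD, symmDiff_symmDiff_cancel_left]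
  rw [← g0, ← g1]
  refine (htel (n * n)).trans ((Finset.sum_le_sum fun c _ => hstep c).trans (le_of_eq ?_))
  exact Finset.sum_fiberwise_of_maps_to (fun x _ => Finset.mem_range.mpr (mo_lt ψ x)) _

/-! ### Decoding and congestion -/

/-- The near-state complementary to `nst G ψ x`: what remains of the multigraph `G + G'` once
`nst G ψ x` is removed, with one trail edge deleted at each of the two defects. -/
def lst (G G' : Finset (Sym2 (Fin n))) (ψ : Fin n → Fin n → Fin n) (x : Fin n × Fin n) :
    Finset (Sym2 (Fin n)) × Fin n × Fin n :=
  (((symmDiff (part G ψ (start G ψ x) x) (symmDiff G G')).erase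
      s((start G ψ x).1, (start G ψ x).2)).erase s(x.2, (step ψ x).2),
    (start G ψ x).2, (step ψ x).2)

/-- The symmetric difference of `G` and `G'`, recovered from two complementary near-states. -/
def decH (N L : Finset (Sym2 (Fin n)) × Fin n × Fin n) : Finset (Sym2 (Fin n)) :=
  symmDiff N.1 (insert s(N.2.1, L.2.1) (insert s(N.2.2, L.2.2) L.1))

/-- One of the two classes exchanged by the pairing at `y`, recovered from two complementary
near-states. -/
def decT (N L : Finset (Sym2 (Fin n)) × Fin n × Fin n) (y : Fin n) : Finset (Fin n) :=
  Tst N.1 (decH N L) N.2.1 N.2.2 L.2.1 L.2.2 y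

/-- The other class exchanged by the pairing at `y`. -/
def decU (N L : Finset (Sym2 (Fin n)) × Fin n × Fin n) (y : Fin n) : Finset (Fin n) :=
  nb (decH N L) y \ decT N L y

section decode

variable {d : Fin n → ℕ} {G G' : Finset (Sym2 (Fin n))} {ψ : Fin n → Fin n → Fin n}
  {x : Fin n × Fin n}

lemma decH_eq (a : Alt G (symmDiff G G') ψ) (hx : x ∈ blue G ψ) :
    decH (nst G ψ x) (lst G G' ψ x) = symmDiff G G' := by
  have c := a.cut_blue hx
  have n1 := c.h_notMem
  have n2 := c.step_x_notMem a
  have n3 := c.edges_ne a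
  have m1 := a.mem_of_posD (c.sub c.hS)
  have m2 := a.mem_of_posD (c.step_x_posD a)
  have hf : (step ψ x).1 = x.2 := rfl
  rw [hf] at n2 n3 m2
  simp only [decH, nst, lst, part]
  rw [Finset.insert_erase, Finset.insert_erase, symmDiff_symmDiff_cancel_left]
  · rw [Finset.mem_symmDiff]; exact Or.inr ⟨m1, n1⟩
  · exact Finset.mem_erase.mpr ⟨n3.symm, Finset.mem_symmDiff.mpr (Or.inr ⟨m2, n2⟩)⟩

lemma decT_eq (a : Alt G (symmDiff G G') ψ) (hx : x ∈ blue G ψ) (y : Fin n) :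
    decT (nst G ψ x) (lst G G' ψ x) y =
      Tst (symmDiff G (edg (seg ψ (start G ψ x) (idx ψ (start G ψ x) x + 1)))) (symmDiff G G')
        (start G ψ x).1 x.2 (start G ψ x).2 (step ψ x).2 y := by
  rw [decT, decH_eq a hx]; rfl

lemma psi_mem_dec (a : Alt G (symmDiff G G') ψ) (hx : x ∈ blue G ψ) :
    ψ ∈ pairs (decT (nst G ψ x) (lst G G' ψ x)) (decU (nst G ψ x) (lst G G' ψ x)) := by
  have c := a.cut_blue hx
  rw [mem_pairs]
  intro y
  have hsw := c.swap_Tst a y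
  have hsub := c.Tst_sub a y
  rw [← decT_eq a hx y] at hsw hsub
  have hact := a.act y
  have hinv := a.inv y
  have hH : ∀ z, s(y, z) ∈ symmDiff G G' → s(y, ψ y z) ∈ symmDiff G G' := by
    intro z hz
    rw [hact, hinv]; rw [hact] at hz; exact hz.symm
  have hU : ∀ z, z ∈ decU (nst G ψ x) (lst G G' ψ x) y ↔ s(y, z) ∈ symmDiff G G' ∧
      z ∉ decT (nst G ψ x) (lst G G' ψ x) y := by
    intro z; rw [decU, Finset.mem_sdiff, mem_nb, decH_eq a hx]
  have hT : ∀ z, z ∈ decT (nst G ψ x) (lst G G' ψ x) y → s(y, z) ∈ symmDiff G G' :=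
    fun z hz => mem_nb.mp (hsub hz)
  refine ⟨fun z hz => ?_, fun z hz => ?_, hinv, fun z h1 h2 => ?_⟩
  · rw [hU]; exact ⟨hH z (hT z hz), (hsw z (hT z hz)).mp hz⟩
  · rw [hU] at hz
    by_contra hc
    exact hz.2 ((hsw z hz.1).mpr hc)
  · by_contra hc
    rw [hU] at h2
    exact h2 ⟨(hact z).mpr hc, h1⟩

lemma card_sdiff_nb (hG : Realizes d G) (hG' : Realizes d G') (y : Fin n) :
    (nb (G \ G') y).card = (nb (G' \ G) y).card := by
  have h1 := Cut.card_nb_split G G' y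
  have h2 := Cut.card_nb_split G' G y
  rw [Finset.inter_comm] at h2
  rw [hG.2] at h1
  rw [hG'.2] at h2
  omega

lemma card_pairs_sdiff (hG : Realizes d G) (hG' : Realizes d G') :
    (pairs (nb (G \ G')) (nb (G' \ G))).card = ∏ y, (nb (G \ G') y).card.factorial := by
  refine card_pairs (fun y => ?_) (card_sdiff_nb hG hG')
  rw [Finset.disjoint_left]
  intro z; simp only [mem_nb, Finset.mem_sdiff]; tauto

/-- The encoding does not change the number of possible systems of pairings. -/
lemma card_pairs_dec (hG : Realizes d G) (hG' : Realizes d G')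
    (a : Alt G (symmDiff G G') ψ) (hx : x ∈ blue G ψ) :
    (pairs (decT (nst G ψ x) (lst G G' ψ x)) (decU (nst G ψ x) (lst G G' ψ x))).card =
      (pairs (nb (G \ G')) (nb (G' \ G))).card := by
  have c := a.cut_blue hx
  have hin : G ∩ symmDiff G G' = G \ G' := by
    ext e; simp only [Finset.mem_inter, Finset.mem_symmDiff, Finset.mem_sdiff]; tauto
  rw [card_pairs_sdiff hG hG', card_pairs]
  · refine Finset.prod_congr rfl fun y _ => ?_
    rw [decT_eq a hx, (c.card_Tst_eq a y).1, hin]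
  · exact fun y => Finset.disjoint_sdiff
  · intro y
    rw [decU, decT_eq a hx, decH_eq a hx]
    exact a.half (c.Tst_sub a y) (c.swap_Tst a y)

lemma nst_mem (hG : Realizes d G) (a : Alt G (symmDiff G G') ψ) (hx : x ∈ blue G ψ) :
    nst G ψ x ∈ nears d := by
  simp only [nears, Finset.mem_filter, Finset.mem_univ, true_and]
  exact (a.cut_blue hx).near a hG

lemma lst_mem (hG : Realizes d G) (a : Alt G (symmDiff G G') ψ) (hx : x ∈ blue G ψ) :
    lst G G' ψ x ∈ nears d := by
  simp only [nears, Finset.mem_filter, Finset.mem_univ, true_and]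
  exact (a.cut_blue hx).near' a hG

/-- The two complementary near-states and the pairings determine everything. -/
lemma decode_inj {G₁ G₁' : Finset (Sym2 (Fin n))} {x₁ : Fin n × Fin n}
    (a : Alt G (symmDiff G G') ψ) (hx : x ∈ blue G ψ)
    (a₁ : Alt G₁ (symmDiff G₁ G₁') ψ) (hx₁ : x₁ ∈ blue G₁ ψ)
    (hN : nst G ψ x = nst G₁ ψ x₁) (hL : lst G G' ψ x = lst G₁ G₁' ψ x₁) :
    G = G₁ ∧ G' = G₁' ∧ x = x₁ := by
  have hH : symmDiff G G' = symmDiff G₁ G₁' := by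
    rw [← decH_eq a hx, ← decH_eq a₁ hx₁, hN, hL]
  have hst : start G ψ x = start G₁ ψ x₁ :=
    Prod.ext (congrArg (fun N => N.2.1) hN) (congrArg (fun N => N.2.1) hL)
  have hxx : x = x₁ := a.step_injective
    (Prod.ext (congrArg (fun N => N.2.2) hN) (congrArg (fun N => N.2.2) hL))
  have hp : part G ψ (start G ψ x) x = part G₁ ψ (start G₁ ψ x₁) x₁ := congrArg Prod.fst hN
  rw [part, part, hst, hxx] at hp
  have hGG : G = G₁ := symmDiff_left_injective _ hp
  refine ⟨hGG, ?_, hxx⟩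
  rw [hGG] at hH
  exact symmDiff_right_injective _ hH

end decode

/-- The data `(G, G', ψ, x)` of a path from `G` to `G'` and a position on it. -/
def posns (d : Fin n → ℕ) : Finset (Finset (Sym2 (Fin n)) × Finset (Sym2 (Fin n)) ×
    (Fin n → Fin n → Fin n) × (Fin n × Fin n)) :=
  Finset.univ.filter fun τ => Realizes d τ.1 ∧ Realizes d τ.2.1 ∧
    τ.2.2.1 ∈ pairs (nb (τ.1 \ τ.2.1)) (nb (τ.2.1 \ τ.1)) ∧ τ.2.2.2 ∈ blue τ.1 τ.2.2.1

lemma congestion_posns (d : Fin n → ℕ) (F : Finset (Sym2 (Fin n)) → ℝ) :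
    ∑ τ ∈ posns d, ((pairs (nb (τ.1 \ τ.2.1)) (nb (τ.2.1 \ τ.1))).card : ℝ)⁻¹ *
        enN d F (nst τ.1 τ.2.2.1 τ.2.2.2) ≤
      (nears d).card * ∑ N ∈ nears d, enN d F N := by
  let Φ : Finset (Sym2 (Fin n)) × Finset (Sym2 (Fin n)) ×
      (Fin n → Fin n → Fin n) × (Fin n × Fin n) →
      ((Finset (Sym2 (Fin n)) × Fin n × Fin n) × (Finset (Sym2 (Fin n)) × Fin n × Fin n)) ×
        (Fin n → Fin n → Fin n) := fun τ =>
    ((nst τ.1 τ.2.2.1 τ.2.2.2, lst τ.1 τ.2.1 τ.2.2.1 τ.2.2.2), τ.2.2.1)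
  let g : ((Finset (Sym2 (Fin n)) × Fin n × Fin n) × (Finset (Sym2 (Fin n)) × Fin n × Fin n)) ×
        (Fin n → Fin n → Fin n) → ℝ := fun σ =>
    if σ.2 ∈ pairs (decT σ.1.1 σ.1.2) (decU σ.1.1 σ.1.2) then
      ((pairs (decT σ.1.1 σ.1.2) (decU σ.1.1 σ.1.2)).card : ℝ)⁻¹ * enN d F σ.1.1 else 0
  have hg : ∀ σ, 0 ≤ g σ := by
    intro σ
    simp only [g]
    split_ifs
    · exact mul_nonneg (by positivity) (enN_nonneg _ _ _)
    · exact le_rfl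
  have hpos : ∀ τ ∈ posns d, Realizes d τ.1 ∧ Realizes d τ.2.1 ∧
      Alt τ.1 (symmDiff τ.1 τ.2.1) τ.2.2.1 ∧ τ.2.2.2 ∈ blue τ.1 τ.2.2.1 := by
    intro τ hτ
    obtain ⟨-, h1, h2, h3, h4⟩ := Finset.mem_filter.mp hτ
    exact ⟨h1, h2, Alt.of_pairs h1 h2 h3, h4⟩
  calc _ = ∑ τ ∈ posns d, g (Φ τ) := by
        refine Finset.sum_congr rfl fun τ hτ => ?_
        obtain ⟨h1, h2, a, hx⟩ := hpos τ hτ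
        simp only [g, Φ]
        rw [if_pos (psi_mem_dec a hx), card_pairs_dec h1 h2 a hx]
    _ = ∑ σ ∈ (posns d).image Φ, g σ := by
        rw [Finset.sum_image]
        rintro ⟨G, G', ψ, x⟩ hτ ⟨G₁, G₁', ψ₁, x₁⟩ hτ₁ he
        obtain ⟨-, -, a, hx⟩ := hpos _ hτ
        obtain ⟨-, -, a₁, hx₁⟩ := hpos _ hτ₁
        simp only [Φ, Prod.mk.injEq] at he a hx a₁ hx₁
        obtain ⟨⟨hN, hL⟩, rfl⟩ := he
        obtain ⟨rfl, rfl, rfl⟩ := decode_inj a hx a₁ hx₁ hN hL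
        rfl
    _ ≤ ∑ σ ∈ (nears d ×ˢ nears d) ×ˢ Finset.univ, g σ := by
        refine Finset.sum_le_sum_of_subset_of_nonneg ?_ fun σ _ _ => hg σ
        intro σ hσ
        obtain ⟨τ, hτ, rfl⟩ := Finset.mem_image.mp hσ
        obtain ⟨h1, h2, a, hx⟩ := hpos τ hτ
        simp only [Φ, Finset.mem_product, Finset.mem_univ, and_true]
        exact ⟨nst_mem h1 a hx, lst_mem h1 a hx⟩
    _ = ∑ NL ∈ nears d ×ˢ nears d, ∑ ψ, g (NL, ψ) := Finset.sum_product _ _ _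
    _ ≤ ∑ NL ∈ nears d ×ˢ nears d, enN d F NL.1 := by
        refine Finset.sum_le_sum fun NL _ => ?_
        simp only [g]
        rw [← Finset.sum_filter, Finset.filter_mem_eq_inter, Finset.univ_inter, Finset.sum_const,
          nsmul_eq_mul, ← mul_assoc]
        exact mul_le_of_le_one_left (enN_nonneg _ _ _) mul_inv_le_one
    _ = (nears d).card * ∑ N ∈ nears d, enN d F N := by
        rw [Finset.sum_product_right]
        simp only [Finset.sum_const, nsmul_eq_mul]

lemma sum_posns (d : Fin n → ℕ) (f : Finset (Sym2 (Fin n)) → Finset (Sym2 (Fin n)) →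
    (Fin n → Fin n → Fin n) → (Fin n × Fin n) → ℝ) :
    ∑ τ ∈ posns d, f τ.1 τ.2.1 τ.2.2.1 τ.2.2.2 =
      ∑ G ∈ reals d, ∑ G' ∈ reals d, ∑ ψ ∈ pairs (nb (G \ G')) (nb (G' \ G)),
        ∑ x ∈ blue G ψ, f G G' ψ x := by
  rw [posns, Finset.sum_filter, Fintype.sum_prod_type, reals, Finset.sum_filter]
  refine Finset.sum_congr rfl fun G _ => ?_
  rw [Fintype.sum_prod_type]
  split_ifs with h1
  · rw [Finset.sum_filter]
    refine Finset.sum_congr rfl fun G' _ => ?_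
    rw [Fintype.sum_prod_type]
    split_ifs with h2
    · rw [← Finset.univ_inter (pairs (nb (G \ G')) (nb (G' \ G))), ← Finset.filter_mem_eq_inter,
        Finset.sum_filter]
      refine Finset.sum_congr rfl fun ψ _ => ?_
      split_ifs with h3
      · rw [← Finset.univ_inter (blue G ψ), ← Finset.filter_mem_eq_inter, Finset.sum_filter]
        exact Finset.sum_congr rfl fun x _ => if_congr (by tauto) rfl rfl
      · exact Finset.sum_eq_zero fun x _ => if_neg (by tauto)
    · exact Finset.sum_eq_zero fun ψ _ => Finset.sum_eq_zero fun x _ => if_neg (by tauto)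
  · exact Finset.sum_eq_zero fun G' _ => Finset.sum_eq_zero fun x _ => if_neg (by tauto)

lemma card_blue_le {d : Fin n → ℕ} {G : Finset (Sym2 (Fin n))} (hG : Realizes d G)
    (ψ : Fin n → Fin n → Fin n) : (blue G ψ).card ≤ M d := by
  have hc : (darts G).card = M d := by
    rw [card_darts]; exact Finset.sum_congr rfl fun y _ => hG.2 y
  rw [← hc]
  refine Finset.card_le_card fun y hy => ?_
  simpa [darts] using (Finset.mem_filter.mp hy).2

lemma sq_path_le {d : Fin n → ℕ} {G G' : Finset (Sym2 (Fin n))} {ψ : Fin n → Fin n → Fin n}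
    (a : Alt G (symmDiff G G') ψ) {D : ℕ} (hd : ∀ y, d y ≤ D) (hD3 : 3 ≤ D)
    (hDM : 9 * D ^ 2 ≤ M d) (F : Finset (Sym2 (Fin n)) → ℝ) (hR : Realizes d G) :
    (F G - F G') ^ 2 ≤ 25 * M d * ∑ x ∈ blue G ψ, enN d F (nst G ψ x) := by
  have h1 := path_total a hd hD3 hDM F hR
  have h2 := sq_sum_le_card_mul_sum_sq (s := blue G ψ) (f := fun x => 5 * √(enN d F (nst G ψ x)))
  have h3 : ∑ x ∈ blue G ψ, (5 * √(enN d F (nst G ψ x))) ^ 2 =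
      25 * ∑ x ∈ blue G ψ, enN d F (nst G ψ x) := by
    rw [Finset.mul_sum]
    refine Finset.sum_congr rfl fun x _ => ?_
    rw [mul_pow, Real.sq_sqrt (enN_nonneg _ _ _)]; norm_num
  rw [h3] at h2
  have h4 : 0 ≤ ∑ x ∈ blue G ψ, enN d F (nst G ψ x) :=
    Finset.sum_nonneg fun _ _ => enN_nonneg _ _ _
  have h5 : ((blue G ψ).card : ℝ) ≤ M d := by exact_mod_cast card_blue_le hR ψ
  rw [← sq_abs]
  calc |F G - F G'| ^ 2 ≤ _ := pow_le_pow_left₀ (abs_nonneg _) h1 2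
    _ ≤ _ := h2
    _ ≤ M d * (25 * ∑ x ∈ blue G ψ, enN d F (nst G ψ x)) :=
        mul_le_mul_of_nonneg_right h5 (by positivity)
    _ = _ := by ring

/-- A Poincaré inequality for functions on the realizations. -/
lemma poincare {d : Fin n → ℕ} {D : ℕ} (hd : ∀ y, d y ≤ D) (hD3 : 3 ≤ D)
    (hDM : 9 * D ^ 2 ≤ M d) (F : Finset (Sym2 (Fin n)) → ℝ) :
    ∑ G ∈ reals d, ∑ G' ∈ reals d, (F G - F G') ^ 2 ≤
      25 * (M d : ℝ) ^ 5 * (reals d).card * ∑ A ∈ reals d, en d F A := by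
  have h1 : ∀ G ∈ reals d, ∀ G' ∈ reals d, (F G - F G') ^ 2 ≤
      25 * M d * ∑ ψ ∈ pairs (nb (G \ G')) (nb (G' \ G)), ∑ x ∈ blue G ψ,
        ((pairs (nb (G \ G')) (nb (G' \ G))).card : ℝ)⁻¹ * enN d F (nst G ψ x) := by
    intro G hG G' hG'
    have hG : Realizes d G := by simpa [reals] using hG
    have hG' : Realizes d G' := by simpa [reals] using hG'
    set P := pairs (nb (G \ G')) (nb (G' \ G)) with hP
    have hpos : (0 : ℝ) < P.card := by
      rw [hP, card_pairs_sdiff hG hG']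
      exact_mod_cast Finset.prod_pos fun y _ => Nat.factorial_pos _
    have h2 := Finset.sum_le_sum fun ψ (hψ : ψ ∈ P) =>
      sq_path_le (Alt.of_pairs hG hG' hψ) hd hD3 hDM F hG
    rw [Finset.sum_const, nsmul_eq_mul, ← Finset.mul_sum] at h2
    simp_rw [← Finset.mul_sum]
    rw [mul_left_comm, ← div_eq_inv_mul, le_div_iff₀ hpos]
    linarith
  have h2 := congestion_posns d F
  rw [sum_posns d fun G G' ψ x => ((pairs (nb (G \ G')) (nb (G' \ G))).card : ℝ)⁻¹ *
        enN d F (nst G ψ x)] at h2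
  have h3 := sum_enN_le d F
  have h4 : ((nears d).card : ℝ) ≤ (M d : ℝ) ^ 2 * (reals d).card := by
    exact_mod_cast card_nears_le hd hD3 hDM
  have h5 : 0 ≤ ∑ N ∈ nears d, enN d F N := Finset.sum_nonneg fun _ _ => enN_nonneg _ _ _
  calc _ ≤ ∑ G ∈ reals d, ∑ G' ∈ reals d, 25 * (M d : ℝ) *
        ∑ ψ ∈ pairs (nb (G \ G')) (nb (G' \ G)), ∑ x ∈ blue G ψ,
        ((pairs (nb (G \ G')) (nb (G' \ G))).card : ℝ)⁻¹ * enN d F (nst G ψ x) :=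
        Finset.sum_le_sum fun G hG => Finset.sum_le_sum fun G' hG' => h1 G hG G' hG'
    _ ≤ 25 * (M d : ℝ) * ((nears d).card * ∑ N ∈ nears d, enN d F N) := by
        simp_rw [← Finset.mul_sum] at h2 ⊢
        exact mul_le_mul_of_nonneg_left h2 (by positivity)
    _ ≤ 25 * (M d : ℝ) * (((M d : ℝ) ^ 2 * (reals d).card) *
        ((M d : ℝ) ^ 2 * ∑ A ∈ reals d, en d F A)) := by
        gcongr
    _ = _ := by ring

/-! ### The mixing time -/

lemma sum_reals (d : Fin n → ℕ) (f : Finset (Sym2 (Fin n)) → ℝ) :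
    ∑ A ∈ reals d, f A = ∑ G : OmegaType d, f (es G.1) := by
  refine (Finset.sum_bij (fun (G : OmegaType d) _ => es G.1) ?_ ?_ ?_ ?_).symm
  · intro G _; simpa [reals] using realizes_es.mpr G.2
  · intro G _ G' _ h; exact Subtype.ext (es_injective h)
  · intro A hA
    obtain ⟨G, hG⟩ := exists_es (d := d) (E := A) (by simpa [reals] using hA)
    exact ⟨G, Finset.mem_univ _, hG⟩
  · intro G _; rfl

lemma card_reals (d : Fin n → ℕ) : ((reals d).card : ℝ) = Fintype.card (OmegaType d) := by
  have := sum_reals d fun _ => 1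
  simpa using this

lemma poincare_transP {d : Fin n → ℕ} {D : ℕ} (hd : ∀ y, d y ≤ D) (hD3 : 3 ≤ D)
    (hDM : 9 * D ^ 2 ≤ M d) (f : OmegaType d → ℝ) :
    ∑ x, ∑ y, (f x - f y) ^ 2 ≤ 10 * (M d : ℝ) ^ 7 * Fintype.card (OmegaType d) *
      ∑ x, ∑ y, transP d x y * (f x - f y) ^ 2 := by
  let F : Finset (Sym2 (Fin n)) → ℝ := fun A =>
    if h : ∃ G : OmegaType d, es G.1 = A then f h.choose else 0
  have hF : ∀ G : OmegaType d, F (es G.1) = f G := by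
    intro G
    have h : ∃ G' : OmegaType d, es G'.1 = es G.1 := ⟨G, rfl⟩
    simp only [F]
    rw [dif_pos h]
    exact congrArg f (Subtype.ext (es_injective h.choose_spec))
  have h1 := poincare hd hD3 hDM F
  rw [card_reals, sum_reals, sum_reals] at h1
  simp_rw [sum_reals, hF] at h1
  have h2 : ∑ G : OmegaType d, en d F (es G.1) ≤ 3 / 8 * (M d : ℝ) ^ 2 *
      ∑ x, ∑ y, transP d x y * (f x - f y) ^ 2 := by
    rw [Finset.mul_sum]
    refine Finset.sum_le_sum fun G _ => ?_
    rw [en, Finset.sum_filter, sum_reals, Finset.mul_sum]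
    refine Finset.sum_le_sum fun G' _ => ?_
    rw [hF, hF, ← mul_assoc]
    split_ifs with h
    · exact le_mul_of_one_le_left (sq_nonneg _) (transP_switch G G' h)
    · exact mul_nonneg (mul_nonneg (by positivity) (transP_nonneg _ _)) (sq_nonneg _)
  have h3 : 0 ≤ ∑ x, ∑ y, transP d x y * (f x - f y) ^ 2 :=
    Finset.sum_nonneg fun x _ => Finset.sum_nonneg fun y _ =>
      mul_nonneg (transP_nonneg _ _) (sq_nonneg _)
  calc _ ≤ _ := h1
    _ ≤ 25 * (M d : ℝ) ^ 5 * Fintype.card (OmegaType d) * (3 / 8 * (M d : ℝ) ^ 2 *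
      ∑ x, ∑ y, transP d x y * (f x - f y) ^ 2) := by gcongr
    _ = 75 / 8 * ((M d : ℝ) ^ 7 * Fintype.card (OmegaType d) *
      ∑ x, ∑ y, transP d x y * (f x - f y) ^ 2) := by ring
    _ ≤ 10 * ((M d : ℝ) ^ 7 * Fintype.card (OmegaType d) *
      ∑ x, ∑ y, transP d x y * (f x - f y) ^ 2) := by gcongr; norm_num
    _ = _ := by ring

theorem main_undirected
    (d : Fin n → ℕ) (hgraphical : (Omega d).Nonempty)
    (hdmin : ∀ v, 1 ≤ d v)
    (hdmax3 : 3 ≤ dmax d)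
    (hdmaxM : (dmax d : ℝ) ≤ (1 / 3) * Real.sqrt (M d))
    (ε : ℝ) (hε0 : 0 < ε) (hε1 : ε < 1) :
    (mixingTime (transP d) (uniformDist d) ε : ℝ) ≤
      (dmax d : ℝ) ^ 14 * (M d : ℝ) ^ 9 *
        ((1 / 2) * (M d : ℝ) * Real.log (M d) + Real.log ε⁻¹) := by
  have hd : ∀ y, d y ≤ dmax d := fun y => Finset.le_sup (f := d) (Finset.mem_univ y)
  have hDM : 9 * dmax d ^ 2 ≤ M d := by
    have h1 : 3 * (dmax d : ℝ) ≤ √(M d) := by linarith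
    have h2 := pow_le_pow_left₀ (by positivity) h1 2
    rw [Real.sq_sqrt (by positivity), mul_pow] at h2
    norm_num at h2
    exact_mod_cast h2
  have hD : (3 : ℝ) ≤ dmax d := by exact_mod_cast hdmax3
  have hM : (81 : ℝ) ≤ M d := by
    have : 81 ≤ M d := by nlinarith
    exact_mod_cast this
  obtain ⟨G0, hG0⟩ := hgraphical
  have hcard : (0 : ℝ) < Fintype.card (OmegaType d) := by
    exact_mod_cast Fintype.card_pos_iff.mpr (⟨⟨G0, hG0⟩⟩ : Nonempty (OmegaType d))
  set X : ℝ := (1 / 2) * (M d : ℝ) * Real.log (M d) + Real.log ε⁻¹ with hX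
  have hlogε : 0 ≤ Real.log ε⁻¹ := Real.log_nonneg (one_le_inv_iff₀.mpr ⟨hε0, hε1.le⟩)
  have hlogM : 1 ≤ Real.log (M d) := by
    rw [Real.le_log_iff_exp_le (by linarith)]
    linarith [Real.exp_one_lt_d9]
  have hX1 : 1 ≤ X := by nlinarith
  have hlogcard : Real.log (Fintype.card (OmegaType d)) ≤ M d * Real.log (M d) := by
    rw [← Real.log_pow]
    exact Real.log_le_log hcard (by exact_mod_cast card_omega_le hdmin)
  have hM7 : (1 : ℝ) ≤ (M d : ℝ) ^ 7 := one_le_pow₀ (by linarith)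
  have key := mixingTime_le (transP d) (uniformDist d) ε (3 * (10 * (M d : ℝ) ^ 7) * X)
    (by positivity) (fun x t ht => dTV_le (transP d) transP_symm transP_nonneg transP_row
      transP_diag (10 * (M d : ℝ) ^ 7) (by linarith)
      (fun f => poincare_transP hd hdmax3 hDM f) ε hε0 x t
      (le_trans (mul_le_mul_of_nonneg_left (by rw [hX]; linarith) (by positivity)) ht))
  have hD14 : (1 : ℝ) ≤ (dmax d : ℝ) ^ 14 := one_le_pow₀ (by linarith)
  have hM9 : 31 * (M d : ℝ) ^ 7 ≤ (M d : ℝ) ^ 9 := by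
    have : (31 : ℝ) ≤ (M d : ℝ) ^ 2 := by nlinarith
    calc _ ≤ (M d : ℝ) ^ 2 * (M d : ℝ) ^ 7 := by gcongr
      _ = _ := by ring
  calc _ ≤ 3 * (10 * (M d : ℝ) ^ 7) * X + 1 := key
    _ ≤ 31 * (M d : ℝ) ^ 7 * X := by nlinarith
    _ ≤ (M d : ℝ) ^ 9 * X := by gcongr
    _ = 1 * (M d : ℝ) ^ 9 * X := by ring
    _ ≤ _ := by gcongr
end SwitchChain
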